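/- arXiv:1510.06328 — 4 statements merged into one kernel-verified Lean document; each statement's English description precedes it below -/
import Mathlib

section
/- For a permutation σ of length n avoiding 4213, 2413 and 2143, let top(σ) = n − max{k : k is an H-gridding cutoff of σ}. Then top is asymptotically normally distributed with mean n/5 and standard deviation 2√n/5: for every real x, the proportion |{σ ∈ Av_n(4213,2413,2143) : top(σ) ≤ n/5 + x·(2√n/5)}| / |Av_n(4213,2413,2143)| converges, as n → ∞, to Φ(x) = (1/√(2π)) ∫_{−∞}^{x} e^{−t²/2} dt. -/
open Filter Topology PowerSeries

/-- `σ` contains the pattern `π`. -/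
def PatternContains {n k : ℕ} (σ : Equiv.Perm (Fin n)) (π : Fin k → Fin k) : Prop :=
  ∃ f : Fin k → Fin n, StrictMono f ∧ ∀ a b : Fin k, π a < π b ↔ σ (f a) < σ (f b)

/-- `σ` avoids the pattern `π`. -/
def PatternAvoids {n k : ℕ} (σ : Equiv.Perm (Fin n)) (π : Fin k → Fin k) : Prop :=
  ¬ PatternContains σ π

/-- The pattern 4213 (zero-indexed values). -/
def p4213 : Fin 4 → Fin 4 := ![3, 1, 0, 2]

/-- The pattern 2413 (zero-indexed values). -/
def p2413 : Fin 4 → Fin 4 := ![1, 3, 0, 2]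

/-- The pattern 2143 (zero-indexed values). -/
def p2143 : Fin 4 → Fin 4 := ![1, 0, 3, 2]

/-- The pattern 213 (zero-indexed values). -/
def p213 : Fin 3 → Fin 3 := ![1, 0, 2]

/-- `σ` avoids 4213, 2413 and 2143. -/
def AvoidsH {n : ℕ} (σ : Equiv.Perm (Fin n)) : Prop :=
  PatternAvoids σ p4213 ∧ PatternAvoids σ p2413 ∧ PatternAvoids σ p2143

/-- `σ` avoids 4213 and 2143. -/
def AvoidsD {n : ℕ} (σ : Equiv.Perm (Fin n)) : Prop :=
  PatternAvoids σ p4213 ∧ PatternAvoids σ p2143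

/-- An H-gridding of `σ`: a value cutoff `k ∈ {0,…,n}` such that the subsequence of
entries with (1-based) values `> k` is increasing and the subsequence of entries with
values `≤ k` avoids 213. -/
def HGridding {n : ℕ} (σ : Equiv.Perm (Fin n)) (k : ℕ) : Prop :=
  k ≤ n ∧
  (∀ i j : Fin n, i < j → k < (σ i : ℕ) + 1 → k < (σ j : ℕ) + 1 → σ i < σ j) ∧
  ¬ ∃ f : Fin 3 → Fin n, StrictMono f ∧ (∀ a, (σ (f a) : ℕ) + 1 ≤ k) ∧
      (∀ a b : Fin 3, p213 a < p213 b ↔ σ (f a) < σ (f b))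

/-- A G-gridding of `σ`: a pair `(j, k)` with `0 ≤ j, k ≤ n` such that (i) the first `j`
entries have values `≤ k` and are increasing, (ii) the subsequence of entries at
(1-based) positions `> j` with values `> k` is increasing, and (iii) the subsequence of
entries at positions `> j` with values `≤ k` avoids 213. -/
def GGridding {n : ℕ} (σ : Equiv.Perm (Fin n)) (j k : ℕ) : Prop :=
  j ≤ n ∧ k ≤ n ∧
  (∀ i : Fin n, (i : ℕ) < j → (σ i : ℕ) + 1 ≤ k) ∧
  (∀ i₁ i₂ : Fin n, i₁ < i₂ → (i₂ : ℕ) < j → σ i₁ < σ i₂) ∧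
  (∀ i₁ i₂ : Fin n, i₁ < i₂ → j ≤ (i₁ : ℕ) → k < (σ i₁ : ℕ) + 1 → k < (σ i₂ : ℕ) + 1 →
      σ i₁ < σ i₂) ∧
  ¬ ∃ f : Fin 3 → Fin n, StrictMono f ∧ (∀ a, j ≤ ((f a) : ℕ) ∧ (σ (f a) : ℕ) + 1 ≤ k) ∧
      (∀ a b : Fin 3, p213 a < p213 b ↔ σ (f a) < σ (f b))

/-- The number of permutations of length `n` avoiding 4213, 2413 and 2143. -/
noncomputable def hCount (n : ℕ) : ℕ :=
  Nat.card {σ : Equiv.Perm (Fin n) // AvoidsH σ}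

/-- The number of permutations of length `n` avoiding 4213 and 2143. -/
noncomputable def dCount (n : ℕ) : ℕ :=
  Nat.card {σ : Equiv.Perm (Fin n) // AvoidsD σ}

/-- The minimal number of top points over all H-griddings of `σ`. -/
noncomputable def topPts {n : ℕ} (σ : Equiv.Perm (Fin n)) : ℕ :=
  n - sSup {k | HGridding σ k}

/-- The minimal number of left points over all G-griddings of `σ`. -/
noncomputable def leftPts {n : ℕ} (σ : Equiv.Perm (Fin n)) : ℕ :=
  sInf {j | ∃ k, GGridding σ j k}

/-- Among its first `k` entries, `τ` has an occurrence of the pattern 213. -/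
def Has213Below {n : ℕ} (τ : Equiv.Perm (Fin n)) (k : ℕ) : Prop :=
  ∃ a b c : Fin n, a < b ∧ b < c ∧ (c : ℕ) < k ∧ τ b < τ a ∧ τ a < τ c

/-- The entries of `τ` from index `k` on are increasing. -/
def IncreasingFrom {n : ℕ} (τ : Equiv.Perm (Fin n)) (k : ℕ) : Prop :=
  ∀ i j : Fin n, k ≤ (i : ℕ) → i < j → τ i < τ j

/-- Description of `topPts σ = t`, in terms of the inverse `τ` of `σ`. -/
def HasTop {n : ℕ} (τ : Equiv.Perm (Fin n)) (t : ℕ) : Prop :=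
  t ≤ n ∧ ¬ Has213Below τ (n - t) ∧ IncreasingFrom τ (n - t) ∧
    (0 < t → Has213Below τ (n - t + 1))

lemma Has213Below.mono {n : ℕ} {τ : Equiv.Perm (Fin n)} {k l : ℕ} (h : Has213Below τ k)
    (hkl : k ≤ l) : Has213Below τ l := by
  obtain ⟨a, b, c, h1, h2, h3, h4⟩ := h
  exact ⟨a, b, c, h1, h2, h3.trans_le hkl, h4⟩

lemma exists_p213_iff {n : ℕ} (σ : Equiv.Perm (Fin n)) (k : ℕ) :
    (∃ f : Fin 3 → Fin n, StrictMono f ∧ (∀ a, (σ (f a) : ℕ) + 1 ≤ k) ∧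
      (∀ a b : Fin 3, p213 a < p213 b ↔ σ (f a) < σ (f b))) ↔ Has213Below σ.symm k := by
  constructor
  · rintro ⟨f, hf, hk, h⟩
    refine ⟨σ (f 1), σ (f 0), σ (f 2), (h 1 0).1 (by decide), (h 0 2).1 (by decide),
      hk 2, ?_, ?_⟩
    · simpa using hf (show (0 : Fin 3) < 1 by decide)
    · simpa using hf (show (1 : Fin 3) < 2 by decide)
  · rintro ⟨a, b, c, hab, hbc, hck, h1, h2⟩
    refine ⟨![σ.symm b, σ.symm a, σ.symm c], ?_, ?_, ?_⟩
    · rw [Fin.strictMono_iff_lt_succ]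
      intro i
      fin_cases i
      · exact h1
      · exact h2
    · intro i
      fin_cases i <;> simp <;> omega
    · intro i j
      fin_cases i <;> fin_cases j <;> simp [p213] <;> order

lemma hGridding_iff {n : ℕ} (σ : Equiv.Perm (Fin n)) (k : ℕ) :
    HGridding σ k ↔ k ≤ n ∧ IncreasingFrom σ.symm k ∧ ¬ Has213Below σ.symm k := by
  rw [HGridding, exists_p213_iff]
  refine and_congr_right fun _ => and_congr_left fun _ => ⟨fun h i j hi hij => ?_,
    fun h i j hij hi hj => ?_⟩
  · by_contra hc
    have hne : σ.symm i ≠ σ.symm j := fun e => hij.ne (σ.symm.injective e)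
    have := h (σ.symm j) (σ.symm i) (by order) (by simp; omega) (by simp; omega)
    simp at this
    order
  · by_contra hc
    have hne : σ i ≠ σ j := fun e => hij.ne (σ.injective e)
    have := h (σ j) (σ i) (by omega) (by order)
    simp at this
    order

lemma avoidsH_of_hGridding {n : ℕ} {σ : Equiv.Perm (Fin n)} {k : ℕ} (h : HGridding σ k) :
    AvoidsH σ := by
  obtain ⟨-, hinc, hav⟩ := h
  have key : ∀ (x y z w : Fin n), x < y → x ≠ w → y ≠ w → y < z → w < z →
      σ y < σ x → σ x < σ z → σ z < σ w → False := by
    intro x y z w hxy hxw hyw hyz hwz h1 h2 h3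
    have hz : (σ z : ℕ) + 1 ≤ k := by
      by_contra hc
      have := hinc w z hwz (by omega) (by omega)
      order
    refine hav ((exists_p213_iff σ k).2
      ⟨σ y, σ x, σ z, h1, h2, by omega, by simpa using hxy, by simpa using hyz⟩)
  refine ⟨?_, ?_, ?_⟩ <;> rintro ⟨f, hf, h⟩
  · exact key (f 1) (f 2) (f 3) (f 0) (hf (by decide)) (hf.injective.ne (by decide))
      (hf.injective.ne (by decide)) (hf (by decide)) (hf (by decide)) ((h _ _).1 (by decide))
      ((h _ _).1 (by decide)) ((h _ _).1 (by decide))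
  · exact key (f 0) (f 2) (f 3) (f 1) (hf (by decide)) (hf.injective.ne (by decide))
      (hf.injective.ne (by decide)) (hf (by decide)) (hf (by decide)) ((h _ _).1 (by decide))
      ((h _ _).1 (by decide)) ((h _ _).1 (by decide))
  · exact key (f 0) (f 1) (f 3) (f 2) (hf (by decide)) (hf.injective.ne (by decide))
      (hf.injective.ne (by decide)) (hf (by decide)) (hf (by decide)) ((h _ _).1 (by decide))
      ((h _ _).1 (by decide)) ((h _ _).1 (by decide))

lemma patternContains_of_lt {n : ℕ} {σ : Equiv.Perm (Fin n)} (π : Fin 4 → Fin 4)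
    (ρ : Fin 4 → Fin 4) (hρ : ∀ a, ρ (π a) = a) {f : Fin 4 → Fin n}
    (h01 : f 0 < f 1) (h12 : f 1 < f 2) (h23 : f 2 < f 3)
    (g01 : σ (f (ρ 0)) < σ (f (ρ 1))) (g12 : σ (f (ρ 1)) < σ (f (ρ 2)))
    (g23 : σ (f (ρ 2)) < σ (f (ρ 3))) : PatternContains σ π := by
  refine ⟨f, ?_, ?_⟩
  · rw [Fin.strictMono_iff_lt_succ]
    intro i
    fin_cases i
    exacts [h01, h12, h23]
  · have hmono : StrictMono fun v => σ (f (ρ v)) := by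
      rw [Fin.strictMono_iff_lt_succ]
      intro i
      fin_cases i
      exacts [g01, g12, g23]
    intro a b
    rw [← hmono.lt_iff_lt]
    simp [hρ]

/-- In a permutation avoiding 4213, 2413 and 2143, nothing larger precedes the `3` of a 213. -/
lemma AvoidsH.false_of_larger_before {n : ℕ} {σ : Equiv.Perm (Fin n)} (h : AvoidsH σ)
    {x y z w : Fin n} (hxy : x < y) (hyz : y < z) (hwz : w < z) (h1 : σ y < σ x)
    (h2 : σ x < σ z) (h3 : σ z < σ w) : False := by
  obtain ⟨ha, hb, hc⟩ := h
  rcases lt_trichotomy w x with hw | hw | hw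
  · exact ha (patternContains_of_lt p4213 ![2, 1, 3, 0] (by decide) (f := ![w, x, y, z])
      hw hxy hyz h1 h2 h3)
  · subst hw; order
  rcases lt_trichotomy w y with hw' | hw' | hw'
  · exact hb (patternContains_of_lt p2413 ![2, 0, 3, 1] (by decide) (f := ![x, w, y, z])
      hw hw' hyz h1 h2 h3)
  · subst hw'; order
  · exact hc (patternContains_of_lt p2143 ![1, 0, 3, 2] (by decide) (f := ![x, y, w, z])
      hxy hw' hwz h1 h2 h3)

lemma AvoidsH.increasingFrom {n : ℕ} {σ : Equiv.Perm (Fin n)} (h : AvoidsH σ) {k : ℕ}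
    (h0 : ¬ Has213Below σ.symm k) (h1 : Has213Below σ.symm (k + 1)) :
    IncreasingFrom σ.symm k := by
  obtain ⟨a, b, c, hab, hbc, hck, h2, h3⟩ := h1
  have hc : (c : ℕ) = k := by
    by_contra hc
    exact h0 ⟨a, b, c, hab, hbc, by omega, h2, h3⟩
  have after : ∀ i : Fin n, c < i → σ.symm c < σ.symm i := by
    intro i hi
    by_contra hlt
    have hne : σ.symm i ≠ σ.symm c := fun e => hi.ne' (σ.symm.injective e)
    exact h.false_of_larger_before (x := σ.symm b) (y := σ.symm a) (z := σ.symm c)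
      (w := σ.symm i) h2 h3 (by order) (by simpa) (by simpa) (by simpa)
  intro i j hi hij
  have hci : c ≤ i := by rw [Fin.le_def]; omega
  rcases hci.eq_or_lt with rfl | hci
  · exact after j hij
  · have hj := after j (hci.trans hij)
    by_contra hlt
    have hne : σ.symm i ≠ σ.symm j := fun e => hij.ne (σ.symm.injective e)
    have hi' := after i hci
    have hbi : b < j := by order
    refine h.false_of_larger_before (x := σ.symm b) (y := σ.symm a) (z := σ.symm i)
      (w := σ.symm j) h2 (by order) ?_ (by simpa) (by simp; order) (by simpa)
    order

lemma hGridding_sSup_eq {n : ℕ} {σ : Equiv.Perm (Fin n)} {k : ℕ} (h : HGridding σ k)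
    (hk : k < n → Has213Below σ.symm (k + 1)) : sSup {k | HGridding σ k} = k := by
  refine IsGreatest.csSup_eq ⟨h, fun l hl => ?_⟩
  rw [Set.mem_ofPred_eq, hGridding_iff] at hl
  by_contra hlt
  exact hl.2.2 ((hk (by omega)).mono (by omega))

lemma avoidsH_and_topPts_iff {n : ℕ} (σ : Equiv.Perm (Fin n)) (t : ℕ) :
    AvoidsH σ ∧ topPts σ = t ↔ HasTop σ.symm t := by
  constructor
  · rintro ⟨h, rfl⟩
    have hex : ∃ k ≤ n, ¬ Has213Below σ.symm k ∧ (k < n → Has213Below σ.symm (k + 1)) := by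
      classical
      let k := Nat.findGreatest (fun k => ¬ Has213Below σ.symm k) n
      refine ⟨k, Nat.findGreatest_le n, ?_, fun hk => ?_⟩
      · refine Nat.findGreatest_spec (P := fun k => ¬ Has213Below σ.symm k) (Nat.zero_le n) ?_
        rintro ⟨_, _, c, _, _, hc, _⟩
        omega
      · by_contra hc
        have := Nat.le_findGreatest (P := fun k => ¬ Has213Below σ.symm k) hk hc
        omega
    obtain ⟨k, hkn, h0, h1⟩ := hex
    have hinc : IncreasingFrom σ.symm k := by
      rcases hkn.eq_or_lt with rfl | hlt
      · intro i j hi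
        omega
      · exact h.increasingFrom h0 (h1 hlt)
    have htop : topPts σ = n - k := by
      rw [topPts, hGridding_sSup_eq ((hGridding_iff σ k).2 ⟨hkn, hinc, h0⟩) h1]
    have hk : n - (n - k) = k := by omega
    rw [htop, HasTop, hk]
    exact ⟨by omega, h0, hinc, fun ht => h1 (by omega)⟩
  · rintro ⟨ht, h0, hinc, h1⟩
    have hg := (hGridding_iff σ (n - t)).2 ⟨by omega, hinc, h0⟩
    refine ⟨avoidsH_of_hGridding hg, ?_⟩
    rw [topPts, hGridding_sSup_eq hg fun hlt => h1 (by omega)]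
    omega

/-- Appending a last entry `p` to a permutation, shifting up the entries that are `≥ p`. -/
def snocPerm {n : ℕ} (τ : Equiv.Perm (Fin n)) (p : Fin (n + 1)) : Equiv.Perm (Fin (n + 1)) :=
  (finSuccEquiv' (Fin.last n)).trans ((Equiv.optionCongr τ).trans (finSuccEquiv' p).symm)

@[simp] lemma snocPerm_last {n : ℕ} (τ : Equiv.Perm (Fin n)) (p : Fin (n + 1)) :
    snocPerm τ p (Fin.last n) = p := by
  simp [snocPerm]

@[simp] lemma snocPerm_castSucc {n : ℕ} (τ : Equiv.Perm (Fin n)) (p : Fin (n + 1)) (i : Fin n) :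
    snocPerm τ p i.castSucc = p.succAbove (τ i) := by
  rw [← Fin.succAbove_last_apply i]
  simp only [snocPerm, Equiv.trans_apply, finSuccEquiv'_succAbove]
  simp

lemma snocPerm_bijective (n : ℕ) :
    Function.Bijective fun x : Equiv.Perm (Fin n) × Fin (n + 1) => snocPerm x.1 x.2 := by
  rw [Fintype.bijective_iff_injective_and_card]
  constructor
  · rintro ⟨τ, p⟩ ⟨τ', p'⟩ h
    simp only at h
    have hp : p = p' := by
      rw [← snocPerm_last τ p, h, snocPerm_last]
    subst hp
    have hτ : τ = τ' := by
      ext1 i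
      have := congrArg (fun ρ => ρ i.castSucc) h
      simpa using this
    rw [hτ]
  · simp [Fintype.card_perm, Nat.factorial_succ, mul_comm]

lemma card_filter_perm_succ {n : ℕ} (P : Equiv.Perm (Fin (n + 1)) → Prop) [DecidablePred P] :
    (Finset.univ.filter P).card =
      ∑ p : Fin (n + 1), (Finset.univ.filter fun τ => P (snocPerm τ p)).card := by
  simp only [Finset.card_filter]
  rw [← (snocPerm_bijective n).sum_comp fun τ => if P τ then 1 else 0,
    Fintype.sum_prod_type_right]

lemma snocPerm_lt_iff {n : ℕ} (τ : Equiv.Perm (Fin n)) (p : Fin (n + 1)) (i j : Fin n) :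
    snocPerm τ p i.castSucc < snocPerm τ p j.castSucc ↔ τ i < τ j := by
  simp

lemma has213Below_snocPerm {n k : ℕ} (hk : k ≤ n) (τ : Equiv.Perm (Fin n)) (p : Fin (n + 1)) :
    Has213Below (snocPerm τ p) k ↔ Has213Below τ k := by
  constructor
  · rintro ⟨a, b, c, hab, hbc, hck, h1, h2⟩
    obtain ⟨a, rfl⟩ := Fin.exists_castSucc_eq.2 (show a ≠ Fin.last n by
      rw [ne_eq, Fin.ext_iff, Fin.val_last]; omega)
    obtain ⟨b, rfl⟩ := Fin.exists_castSucc_eq.2 (show b ≠ Fin.last n by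
      rw [ne_eq, Fin.ext_iff, Fin.val_last]; omega)
    obtain ⟨c, rfl⟩ := Fin.exists_castSucc_eq.2 (show c ≠ Fin.last n by
      rw [ne_eq, Fin.ext_iff, Fin.val_last]; omega)
    rw [snocPerm_lt_iff] at h1 h2
    exact ⟨a, b, c, hab, hbc, hck, h1, h2⟩
  · rintro ⟨a, b, c, hab, hbc, hck, h1, h2⟩
    exact ⟨a.castSucc, b.castSucc, c.castSucc, hab, hbc, hck, (snocPerm_lt_iff ..).2 h1,
      (snocPerm_lt_iff ..).2 h2⟩

/-- `τ` has an inversion whose larger entry is below `p`. -/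
def HasInversionBelow {n : ℕ} (τ : Equiv.Perm (Fin n)) (p : ℕ) : Prop :=
  ∃ a b : Fin n, a < b ∧ τ b < τ a ∧ (τ a : ℕ) < p

lemma HasInversionBelow.mono {n : ℕ} {τ : Equiv.Perm (Fin n)} {p q : ℕ}
    (h : HasInversionBelow τ p) (hpq : p ≤ q) : HasInversionBelow τ q := by
  obtain ⟨a, b, h1, h2, h3⟩ := h
  exact ⟨a, b, h1, h2, by omega⟩

lemma val_succAbove_lt_iff {n : ℕ} (p : Fin (n + 1)) (i : Fin n) :
    p.succAbove i < p ↔ (i : ℕ) < p := by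
  rw [Fin.succAbove_lt_iff_castSucc_lt]; rfl

lemma val_succAbove {n : ℕ} (p : Fin (n + 1)) (i : Fin n) :
    (p.succAbove i : ℕ) = if (i : ℕ) < p then (i : ℕ) else i + 1 := by
  rw [Fin.succAbove]
  simp only [Fin.lt_def, Fin.val_castSucc]
  split_ifs <;> simp

lemma has213Below_snocPerm_succ {n : ℕ} (τ : Equiv.Perm (Fin n)) (p : Fin (n + 1)) :
    Has213Below (snocPerm τ p) (n + 1) ↔ Has213Below τ n ∨ HasInversionBelow τ p := by
  constructor
  · rintro ⟨a, b, c, hab, hbc, hck, h1, h2⟩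
    by_cases hc : (c : ℕ) < n
    · left
      rw [← has213Below_snocPerm le_rfl τ p]
      exact ⟨a, b, c, hab, hbc, hc, h1, h2⟩
    · right
      obtain rfl : c = Fin.last n := by rw [Fin.ext_iff, Fin.val_last]; omega
      obtain ⟨a, rfl⟩ := Fin.exists_castSucc_eq.2 (hab.trans hbc).ne
      obtain ⟨b, rfl⟩ := Fin.exists_castSucc_eq.2 hbc.ne
      rw [snocPerm_lt_iff] at h1
      rw [snocPerm_last, snocPerm_castSucc, val_succAbove_lt_iff] at h2
      exact ⟨a, b, hab, h1, h2⟩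
  · rintro (h | ⟨a, b, hab, h1, h2⟩)
    · exact ((has213Below_snocPerm le_rfl τ p).2 h).mono (by omega)
    · refine ⟨a.castSucc, b.castSucc, Fin.last n, hab, Fin.castSucc_lt_last b, by simp,
        (snocPerm_lt_iff ..).2 h1, ?_⟩
      rwa [snocPerm_last, snocPerm_castSucc, val_succAbove_lt_iff]

lemma hasInversionBelow_snocPerm {n : ℕ} {τ : Equiv.Perm (Fin n)} {p : Fin (n + 1)}
    (h : ¬ HasInversionBelow τ p) {q : ℕ} (hq : q ≤ n + 1) :
    HasInversionBelow (snocPerm τ p) q ↔ (p : ℕ) + 1 < q := by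
  constructor
  · rintro ⟨a, b, hab, h1, h2⟩
    obtain ⟨a, rfl⟩ := Fin.exists_castSucc_eq.2 (hab.trans_le (Fin.le_last b)).ne
    rw [snocPerm_castSucc, val_succAbove] at h2
    rcases Fin.eq_castSucc_or_eq_last b with ⟨b, rfl⟩ | rfl
    · rw [snocPerm_lt_iff] at h1
      have : ¬ (τ a : ℕ) < p := fun hlt => h ⟨a, b, hab, h1, hlt⟩
      rw [if_neg this] at h2
      omega
    · rw [snocPerm_last, snocPerm_castSucc, Fin.lt_def, val_succAbove] at h1
      split_ifs at h1 h2 <;> omega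
  · intro hlt
    have hpn : (p : ℕ) < n := by omega
    refine ⟨(τ.symm ⟨p, hpn⟩).castSucc, Fin.last n, Fin.castSucc_lt_last _, ?_, ?_⟩
    · rw [snocPerm_last, snocPerm_castSucc, Fin.lt_def, val_succAbove]
      simp
    · rw [snocPerm_castSucc, val_succAbove]
      simpa using hlt

open Classical in
/-- The largest `p ≤ n` such that `τ` has no inversion whose larger entry is below `p`. -/
noncomputable def inversionFloor {n : ℕ} (τ : Equiv.Perm (Fin n)) : ℕ :=
  Nat.findGreatest (fun p => ¬ HasInversionBelow τ p) n

lemma inversionFloor_le {n : ℕ} (τ : Equiv.Perm (Fin n)) : inversionFloor τ ≤ n := by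
  classical exact Nat.findGreatest_le n

lemma hasInversionBelow_iff {n : ℕ} (τ : Equiv.Perm (Fin n)) {p : ℕ} (hp : p ≤ n) :
    HasInversionBelow τ p ↔ inversionFloor τ < p := by
  classical
  have h0 : ¬ HasInversionBelow τ (inversionFloor τ) := by
    refine Nat.findGreatest_spec (P := fun p => ¬ HasInversionBelow τ p) (Nat.zero_le n) ?_
    rintro ⟨_, _, _, _, h⟩
    omega
  constructor
  · intro h
    by_contra hlt
    exact h0 (h.mono (by omega))
  · intro hlt
    by_contra hc
    have := Nat.le_findGreatest (P := fun p => ¬ HasInversionBelow τ p) hp hc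
    rw [inversionFloor] at hlt
    omega

lemma inversionFloor_snocPerm {n : ℕ} {τ : Equiv.Perm (Fin n)} {p : Fin (n + 1)}
    (h : ¬ HasInversionBelow τ p) : inversionFloor (snocPerm τ p) = p + 1 := by
  have h1 := (hasInversionBelow_snocPerm h (q := p + 1) (by omega)).not.2 (by omega)
  rw [hasInversionBelow_iff _ (by omega)] at h1
  have h2 := inversionFloor_le (snocPerm τ p)
  have h3 := (hasInversionBelow_iff (snocPerm τ p) h2).not.2 (lt_irrefl _)
  rw [hasInversionBelow_snocPerm h h2] at h3
  omega

lemma increasingFrom_snocPerm {n k : ℕ} (hk : k ≤ n) (τ : Equiv.Perm (Fin (n + 1)))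
    (p : Fin (n + 2)) : IncreasingFrom (snocPerm τ p) k ↔
      IncreasingFrom τ k ∧ (τ (Fin.last n) : ℕ) < p := by
  constructor
  · intro h
    refine ⟨fun i j hi hij => ?_, ?_⟩
    · exact (snocPerm_lt_iff ..).1 (h i.castSucc j.castSucc hi hij)
    · have := h (Fin.last n).castSucc (Fin.last (n + 1)) (by simpa) (Fin.castSucc_lt_last _)
      rwa [snocPerm_last, snocPerm_castSucc, val_succAbove_lt_iff] at this
  · rintro ⟨h, hp⟩ i j hi hij
    obtain ⟨i, rfl⟩ := Fin.exists_castSucc_eq.2 (hij.trans_le (Fin.le_last j)).ne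
    rcases Fin.eq_castSucc_or_eq_last j with ⟨j, rfl⟩ | rfl
    · exact (snocPerm_lt_iff ..).2 (h i j hi hij)
    · rw [snocPerm_last, snocPerm_castSucc, val_succAbove_lt_iff]
      rcases (Fin.le_last i).eq_or_lt with rfl | hlt
      · exact hp
      · exact (Fin.lt_def.1 (h i _ hi hlt)).trans hp

lemma hasTop_zero_iff {n : ℕ} (τ : Equiv.Perm (Fin n)) :
    HasTop τ 0 ↔ ¬ Has213Below τ n := by
  simp only [HasTop, Nat.sub_zero]
  refine ⟨fun h => h.2.1, fun h => ⟨by omega, h, fun i j hi => ?_, by omega⟩⟩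
  omega

lemma hasTop_zero_snocPerm {n : ℕ} (τ : Equiv.Perm (Fin n)) (p : Fin (n + 1)) :
    HasTop (snocPerm τ p) 0 ↔ HasTop τ 0 ∧ (p : ℕ) ≤ inversionFloor τ := by
  rw [hasTop_zero_iff, hasTop_zero_iff, has213Below_snocPerm_succ,
    hasInversionBelow_iff τ (by omega), not_or, not_lt]

lemma hasTop_one_snocPerm {n : ℕ} (τ : Equiv.Perm (Fin n)) (p : Fin (n + 1)) :
    HasTop (snocPerm τ p) 1 ↔ HasTop τ 0 ∧ inversionFloor τ < p := by
  rw [hasTop_zero_iff, ← hasInversionBelow_iff τ (by omega), HasTop, Nat.add_sub_cancel,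
    has213Below_snocPerm le_rfl, has213Below_snocPerm_succ]
  constructor
  · rintro ⟨-, h1, -, h2⟩
    exact ⟨h1, (h2 one_pos).resolve_left h1⟩
  · rintro ⟨h1, h2⟩
    refine ⟨by omega, h1, fun i j hi hij => ?_, fun _ => Or.inr h2⟩
    rw [Fin.lt_def] at hij
    omega

lemma hasTop_succ_snocPerm {n t : ℕ} (τ : Equiv.Perm (Fin (n + 1))) (p : Fin (n + 2)) :
    HasTop (snocPerm τ p) (t + 2) ↔ HasTop τ (t + 1) ∧ (τ (Fin.last n) : ℕ) < p := by
  have e : n + 1 + 1 - (t + 2) = n - t := by omega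
  have e' : n + 1 - (t + 1) = n - t := by omega
  simp only [HasTop, e, e']
  rw [has213Below_snocPerm (by omega), has213Below_snocPerm (by omega),
    increasingFrom_snocPerm (by omega)]
  simp only [Nat.succ_pos, forall_const]
  have e'' : t + 2 ≤ n + 1 + 1 ↔ t + 1 ≤ n + 1 := by omega
  tauto

open Classical in
/-- The number of 213-avoiding permutations of length `m` with `inversionFloor` equal to `r`. -/
noncomputable def floorCount (m r : ℕ) : ℕ :=
  (Finset.univ.filter fun τ : Equiv.Perm (Fin m) => HasTop τ 0 ∧ inversionFloor τ = r).card

open Classical in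
/-- The number of permutations `τ` of length `n + 1` with `HasTop τ (t + 1)` and last entry `v`. -/
noncomputable def lastCount (n t v : ℕ) : ℕ :=
  (Finset.univ.filter fun τ : Equiv.Perm (Fin (n + 1)) =>
    HasTop τ (t + 1) ∧ (τ (Fin.last n) : ℕ) = v).card

open Classical in
lemma card_filter_eq_sum_fiber {α : Type*} [Fintype α] (P : α → Prop) (f : α → ℕ)
    (s : Finset ℕ) :
    (Finset.univ.filter fun a => P a ∧ f a ∈ s).card =
      ∑ r ∈ s, (Finset.univ.filter fun a => P a ∧ f a = r).card := by
  rw [Finset.card_eq_sum_card_fiberwise (f := f) (t := s)]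
  · refine Finset.sum_congr rfl fun r hr => ?_
    congr 1
    ext a
    simp only [Finset.mem_filter, Finset.mem_univ, true_and]
    constructor
    · rintro ⟨⟨h, -⟩, h'⟩
      exact ⟨h, h'⟩
    · rintro ⟨h, rfl⟩
      exact ⟨⟨h, hr⟩, rfl⟩
  · intro a ha
    simp only [Finset.coe_filter, Finset.mem_univ, true_and, Set.mem_ofPred_eq] at ha
    exact ha.2

open Classical in
lemma card_filter_perm_succ_eq {n v w : ℕ} (hv : v ≤ n) (P : Equiv.Perm (Fin (n + 1)) → Prop)
    (f : Equiv.Perm (Fin (n + 1)) → ℕ)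
    (hf : ∀ τ p, P (snocPerm τ p) → (f (snocPerm τ p) = w ↔ (p : ℕ) = v)) :
    (Finset.univ.filter fun τ => P τ ∧ f τ = w).card =
      (Finset.univ.filter fun τ => P (snocPerm τ ⟨v, by omega⟩)).card := by
  rw [card_filter_perm_succ, Finset.sum_eq_single ⟨v, by omega⟩]
  · congr 1
    ext τ
    simp only [Finset.mem_filter, Finset.mem_univ, true_and, and_iff_left_iff_imp]
    exact fun h => (hf _ _ h).2 rfl
  · intro p _ hp
    rw [Finset.card_eq_zero, Finset.filter_eq_empty_iff]
    rintro τ - ⟨h1, h2⟩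
    exact hp (Fin.ext ((hf _ _ h1).1 h2))
  · simp

lemma floorCount_succ_succ {m j : ℕ} (hj : j ≤ m) :
    floorCount (m + 1) (j + 1) = ∑ r ∈ Finset.Icc j m, floorCount m r := by
  classical
  simp only [floorCount]
  rw [card_filter_perm_succ_eq hj, ← card_filter_eq_sum_fiber]
  · congr 1
    ext τ
    have := inversionFloor_le τ
    simp [hasTop_zero_snocPerm, this]
  · intro τ p hp
    rw [hasTop_zero_snocPerm, ← not_lt, ← hasInversionBelow_iff _ (by omega)] at hp
    rw [inversionFloor_snocPerm hp.2]
    omega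

lemma floorCount_succ_zero (m : ℕ) : floorCount (m + 1) 0 = 0 := by
  classical
  rw [floorCount, card_filter_perm_succ]
  refine Finset.sum_eq_zero fun p _ => ?_
  rw [Finset.card_eq_zero, Finset.filter_eq_empty_iff]
  rintro τ - ⟨h1, h2⟩
  rw [hasTop_zero_snocPerm, ← not_lt, ← hasInversionBelow_iff _ (by omega)] at h1
  rw [inversionFloor_snocPerm h1.2] at h2
  omega

lemma floorCount_eq_zero_of_lt {m r : ℕ} (h : m < r) : floorCount m r = 0 := by
  classical
  rw [floorCount, Finset.card_eq_zero, Finset.filter_eq_empty_iff]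
  rintro τ - ⟨-, h2⟩
  have := inversionFloor_le τ
  omega

lemma floorCount_zero_zero : floorCount 0 0 = 1 := by
  classical
  have : ∀ τ : Equiv.Perm (Fin 0), HasTop τ 0 ∧ inversionFloor τ = 0 := fun τ => by
    refine ⟨(hasTop_zero_iff τ).2 ?_, Nat.le_zero.1 (inversionFloor_le τ)⟩
    rintro ⟨a, -⟩
    exact a.elim0
  simp [floorCount, this]

lemma lastCount_zero {n v : ℕ} (hv : v ≤ n) :
    lastCount n 0 v = ∑ r ∈ Finset.range v, floorCount n r := by
  classical
  simp only [lastCount, floorCount]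
  rw [card_filter_perm_succ_eq hv _ _ (by simp), ← card_filter_eq_sum_fiber]
  simp [hasTop_one_snocPerm]

lemma lastCount_succ {n t v : ℕ} (hv : v ≤ n + 1) :
    lastCount (n + 1) (t + 1) v = ∑ r ∈ Finset.range v, lastCount n t r := by
  classical
  simp only [lastCount]
  rw [card_filter_perm_succ_eq hv _ _ (by simp), ← card_filter_eq_sum_fiber]
  simp [hasTop_succ_snocPerm]

lemma sum_range_sum_choose (a : ℕ → ℕ) (t w : ℕ) :
    ∑ v ∈ Finset.range w, ∑ r ∈ Finset.range v, a r * (v - 1 - r).choose t =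
      ∑ r ∈ Finset.range w, a r * (w - 1 - r).choose (t + 1) := by
  induction w with
  | zero => simp
  | succ w ih =>
    rw [Finset.sum_range_succ, ih, Finset.sum_range_succ, ← Finset.sum_add_distrib]
    simp only [Nat.add_sub_cancel, Nat.sub_self, Nat.choose_zero_succ, mul_zero, add_zero]
    refine Finset.sum_congr rfl fun r hr => ?_
    rw [Finset.mem_range] at hr
    obtain ⟨d, rfl⟩ : ∃ d, w = r + 1 + d := ⟨w - (r + 1), by omega⟩
    have h1 : r + 1 + d - 1 - r = d := by omega
    have h2 : r + 1 + d - r = d + 1 := by omega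
    rw [h1, h2, Nat.choose_succ_succ]
    ring

lemma lastCount_eq (m t : ℕ) {v : ℕ} (hv : v ≤ m + t) :
    lastCount (m + t) t v = ∑ r ∈ Finset.range v, floorCount m r * (v - 1 - r).choose t := by
  induction t generalizing v with
  | zero => simpa using lastCount_zero hv
  | succ t ih =>
    rw [← add_assoc, lastCount_succ (by omega), ← sum_range_sum_choose]
    refine Finset.sum_congr rfl fun r hr => ih ?_
    rw [Finset.mem_range] at hr
    omega

open Classical in
lemma card_hasTop {n t : ℕ} (hn : 0 < n) (ht : t ≤ n) :
    (Finset.univ.filter fun τ : Equiv.Perm (Fin n) => HasTop τ t).card =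
      ∑ r ∈ Finset.range (n + 1), floorCount (n - t) r * (n - 1 - r).choose t := by
  rcases t with _ | t
  · simp only [Nat.sub_zero, Nat.choose_zero_right, mul_one, floorCount]
    rw [← card_filter_eq_sum_fiber]
    congr 1
    ext τ
    have := inversionFloor_le τ
    simp [this]
  · obtain ⟨m, rfl⟩ : ∃ m, n = m + t + 1 := ⟨n - (t + 1), by omega⟩
    have e : m + t + 1 - (t + 1) = m := by omega
    rw [Finset.sum_range_succ, e]
    simp only [Nat.add_sub_cancel]
    rw [show m + t - (m + t + 1) = 0 by omega, Nat.choose_zero_succ, mul_zero, add_zero]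
    have := sum_range_sum_choose (floorCount m) t (m + t + 1)
    rw [Nat.add_sub_cancel] at this
    rw [← this]
    calc _ = ∑ v ∈ Finset.range (m + t + 1), lastCount (m + t) t v := by
          simp only [lastCount]
          rw [← card_filter_eq_sum_fiber]
          congr 1
          ext τ
          have := (τ (Fin.last (m + t))).is_le
          simp [this]
      _ = _ := Finset.sum_congr rfl fun v hv => lastCount_eq m t (by
          rw [Finset.mem_range] at hv
          omega)

lemma floorCount_succ_succ_eq_add {m j : ℕ} (hj : j ≤ m) :
    floorCount (m + 1) (j + 1) = floorCount m j + floorCount (m + 1) (j + 2) := by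
  rcases hj.eq_or_lt with rfl | hlt
  · rw [floorCount_succ_succ le_rfl, floorCount_eq_zero_of_lt (by omega : j + 1 < j + 2)]
    simp
  · rw [floorCount_succ_succ hj, floorCount_succ_succ hlt, ← Finset.Ioc_insert_left hj,
      Finset.sum_insert (by simp), ← Finset.Icc_succ_left_eq_Ioc, Nat.succ_eq_succ]

lemma floorCount_add_choose {M j : ℕ} (hj : j ≤ M) :
    floorCount (M + 1) (j + 1) + (2 * M - j).choose (M + 1) = (2 * M - j).choose M := by
  induction M generalizing j with
  | zero =>
    obtain rfl : j = 0 := by omega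
    rw [floorCount_succ_succ le_rfl]
    simp [floorCount_zero_zero]
  | succ M ih =>
    induction hd : M + 1 - j generalizing j with
    | zero =>
      obtain rfl : j = M + 1 := by omega
      have h := ih le_rfl
      have e : 2 * M - M = M := by omega
      have e' : 2 * (M + 1) - (M + 1) = M + 1 := by omega
      rw [floorCount_succ_succ_eq_add le_rfl, floorCount_eq_zero_of_lt (by omega :
        M + 1 + 1 < M + 1 + 2)]
      rw [e] at h
      rw [e']
      simpa using h
    | succ d ihd =>
      have h1 : floorCount (M + 1 + 1) (j + 2) + (2 * (M + 1) - (j + 1)).choose (M + 1 + 1) =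
        (2 * (M + 1) - (j + 1)).choose (M + 1) := ihd (by omega) (by omega)
      rw [floorCount_succ_succ_eq_add hj]
      rcases j with _ | j
      · rw [floorCount_succ_zero]
        have e : 2 * (M + 1) - (0 + 1) = 2 * M + 1 := by omega
        have e' : 2 * (M + 1) - 0 = 2 * M + 1 + 1 := by omega
        rw [e] at h1
        rw [e', Nat.choose_succ_succ', Nat.choose_succ_succ' (2 * M + 1) M]
        have := Nat.choose_symm_half M
        omega
      · have h2 := ih (j := j) (by omega)
        obtain ⟨k, rfl⟩ : ∃ k, M = j + k := ⟨M - j, by omega⟩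
        have e : 2 * (j + k + 1) - (j + 1 + 1) = 2 * (j + k) - j := by omega
        have e' : 2 * (j + k + 1) - (j + 1) = 2 * (j + k) - j + 1 := by omega
        rw [e] at h1
        rw [e', Nat.choose_succ_succ', Nat.choose_succ_succ' _ (j + k)]
        omega

lemma floorCount_mul {M j : ℕ} (hj : j ≤ M) :
    floorCount (M + 1) (j + 1) * (M + 1) = (j + 1) * (2 * M - j).choose M := by
  have h := floorCount_add_choose hj
  have h2 := Nat.choose_succ_right_eq (2 * M - j) M
  obtain ⟨k, rfl⟩ : ∃ k, M = j + k := ⟨M - j, by omega⟩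
  have e : 2 * (j + k) - j - (j + k) = k := by omega
  rw [e] at h2
  zify at h h2 ⊢
  linear_combination (j + k + 1 : ℤ) * h - h2

/-- The normalized number of 213-avoiding permutations of length `M + 1` with `inversionFloor`
equal to `j + 1`. -/
noncomputable def floorRatio (M j : ℕ) : ℝ :=
  floorCount (M + 1) (j + 1) * ((M + 1) * √(M + 1)) / 4 ^ M

lemma floorRatio_nonneg (M j : ℕ) : 0 ≤ floorRatio M j := by
  unfold floorRatio; positivity

lemma floorCount_eq_floorRatio (M j : ℕ) :
    (floorCount (M + 1) (j + 1) : ℝ) = floorRatio M j * 4 ^ M / ((M + 1) * √(M + 1)) := by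
  unfold floorRatio
  have : (0 : ℝ) < √(M + 1) := by positivity
  field_simp

lemma floorRatio_eq {M j : ℕ} (hj : j ≤ M) :
    floorRatio M j = (j + 1) * ((2 * M - j).choose M * √(M + 1) / 4 ^ M) := by
  have h : (floorCount (M + 1) (j + 1) * (M + 1) : ℝ) = (j + 1) * (2 * M - j).choose M := by
    exact_mod_cast floorCount_mul hj
  unfold floorRatio
  rw [← mul_assoc, h]
  ring

lemma tendsto_centralBinom :
    Tendsto (fun M : ℕ => ((2 * M).choose M : ℝ) * √(M + 1) / 4 ^ M) atTop (𝓝 (√Real.pi)⁻¹) := by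
  have h1 := Stirling.tendsto_stirlingSeq_sqrt_pi
  have h2 : Tendsto (fun M : ℕ => Stirling.stirlingSeq (2 * M)) atTop (𝓝 √Real.pi) :=
    h1.comp (tendsto_id.const_mul_atTop' (by norm_num))
  have h3 : Tendsto (fun M : ℕ => √(1 + (M : ℝ)⁻¹)) atTop (𝓝 1) := by
    have : Tendsto (fun M : ℕ => 1 + (M : ℝ)⁻¹) atTop (𝓝 (1 + 0)) :=
      tendsto_const_nhds.add tendsto_inv_atTop_nhds_zero_nat
    simpa [Function.comp_def] using (Real.continuous_sqrt.tendsto _).comp this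
  have hpi : √Real.pi ≠ 0 := (Real.sqrt_pos.2 Real.pi_pos).ne'
  have h4 := (h2.div (h1.pow 2) (pow_ne_zero 2 hpi)).mul h3
  have e : √Real.pi / √Real.pi ^ 2 * 1 = (√Real.pi)⁻¹ := by field_simp
  rw [e] at h4
  refine h4.congr' ?_
  filter_upwards [eventually_gt_atTop 0] with M hM
  have hM' : (0 : ℝ) < M := by exact_mod_cast hM
  have hs : √((M : ℝ) + 1) = √M * √(1 + (M : ℝ)⁻¹) := by
    rw [← Real.sqrt_mul hM'.le]
    congr 1
    field_simp
  have hc : ((2 * M).choose M : ℝ) = (2 * M).factorial / (M.factorial * M.factorial) := by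
    rw [Nat.cast_choose ℝ (by omega)]
    congr 4
    omega
  have hs4 : √(2 * (2 * (M : ℝ))) = 2 * √M := by
    rw [show (2 * (2 * (M : ℝ))) = 2 ^ 2 * M by ring, Real.sqrt_mul (by norm_num),
      Real.sqrt_sq (by norm_num)]
  have hs2 : √(2 * (M : ℝ)) ^ 2 = 2 * M := Real.sq_sqrt (by positivity)
  have hsM : √(M : ℝ) ^ 2 = M := Real.sq_sqrt hM'.le
  have hsM0 : √(M : ℝ) ≠ 0 := (Real.sqrt_pos.2 hM').ne'
  simp only [hs, hc, Stirling.stirlingSeq, Pi.div_apply]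
  push_cast
  have hf : (M.factorial : ℝ) ≠ 0 := by positivity
  have hf2 : ((2 * M).factorial : ℝ) ≠ 0 := by positivity
  have h44 : (4 : ℝ) ^ M = 2 ^ (2 * M) := by rw [pow_mul]; norm_num
  rw [hs4, h44]
  simp only [div_pow, mul_pow, hs2, ← pow_mul, mul_comm M 2]
  field_simp
  linear_combination (-hsM)

lemma choose_two_mul_sub_succ {M j : ℕ} (hj : j + 1 ≤ M) :
    ((2 * M - (j + 1)).choose M : ℝ) = (2 * M - j).choose M * ((M - j) / (2 * M - j)) := by
  obtain ⟨k, rfl⟩ : ∃ k, M = j + 1 + k := ⟨M - (j + 1), by omega⟩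
  have e : 2 * (j + 1 + k) - j = (j + 2 * k + 1) + 1 := by omega
  have e' : 2 * (j + 1 + k) - (j + 1) = j + 2 * k + 1 := by omega
  rw [e, e']
  have h := Nat.choose_mul_succ_eq (j + 2 * k + 1) (j + 1 + k)
  have e'' : j + 2 * k + 1 + 1 - (j + 1 + k) = k + 1 := by omega
  rw [e''] at h
  have h' : ((j + 2 * k + 1).choose (j + 1 + k) : ℝ) * (j + 2 * k + 1 + 1) =
    (j + 2 * k + 1 + 1).choose (j + 1 + k) * (k + 1) := by exact_mod_cast h
  have hp : (j + 2 * k + 1 + 1 : ℝ) ≠ 0 := by positivity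
  push_cast
  rw [show (2 * (j + 1 + k) - j : ℝ) = j + 2 * k + 1 + 1 by ring,
    show (j + 1 + k - j : ℝ) = k + 1 by ring]
  field_simp
  linear_combination h'

lemma choose_two_mul_sub_le {M j : ℕ} (hj : j ≤ M) :
    ((2 * M - j).choose M : ℝ) ≤ (2 * M).choose M * (1 / 2) ^ j := by
  induction j with
  | zero => simp
  | succ j ih =>
    have hM : (j + 1 : ℝ) ≤ M := by exact_mod_cast hj
    rw [choose_two_mul_sub_succ hj, pow_succ, ← mul_assoc]
    have h : ((M : ℝ) - j) / (2 * M - j) ≤ 1 / 2 := by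
      rw [div_le_div_iff₀ (by linarith) (by norm_num)]
      have : (0 : ℝ) ≤ j := by positivity
      linarith
    exact mul_le_mul (ih (by omega)) h (div_nonneg (by linarith) (by linarith)) (by positivity)

lemma tendsto_choose_two_mul_sub (j : ℕ) :
    Tendsto (fun M : ℕ => ((2 * M - j).choose M : ℝ) * √(M + 1) / 4 ^ M) atTop
      (𝓝 ((√Real.pi)⁻¹ * (1 / 2) ^ j)) := by
  induction j with
  | zero => simpa using tendsto_centralBinom
  | succ j ih =>
    have h : Tendsto (fun M : ℕ => ((M : ℝ) - j) / (2 * M - j)) atTop (𝓝 (1 / 2)) := by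
      have h0 : Tendsto (fun M : ℕ => (j : ℝ) / M) atTop (𝓝 0) :=
        tendsto_const_div_atTop_nhds_zero_nat _
      have h1 := ((tendsto_const_nhds (x := (1 : ℝ))).sub h0).div
        ((tendsto_const_nhds (x := (2 : ℝ))).sub h0) (by norm_num)
      simp only [sub_zero] at h1
      refine h1.congr' ?_
      filter_upwards [eventually_gt_atTop j] with M hM
      have h2 : (j : ℝ) < M := by exact_mod_cast hM
      have h3 : (0 : ℝ) ≤ j := by positivity
      have h4 : (M : ℝ) ≠ 0 := by linarith
      have h5 : (2 * M - j : ℝ) ≠ 0 := by linarith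
      have h6 : (2 - j / M : ℝ) = (2 * M - j) / M := by field_simp
      simp only [Pi.div_apply, h6]
      field_simp
    rw [pow_succ, ← mul_assoc]
    refine (ih.mul h).congr' ?_
    filter_upwards [eventually_ge_atTop (j + 1)] with M hM
    rw [choose_two_mul_sub_succ hM]
    ring

lemma tendsto_floorRatio (j : ℕ) :
    Tendsto (fun M => floorRatio M j) atTop (𝓝 ((j + 1) * ((√Real.pi)⁻¹ * (1 / 2) ^ j))) := by
  refine ((tendsto_choose_two_mul_sub j).const_mul (j + 1 : ℝ)).congr' ?_
  filter_upwards [eventually_ge_atTop j] with M hM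
  rw [floorRatio_eq hM]

lemma exists_floorRatio_le :
    ∃ K : ℝ, 0 < K ∧ ∀ M j, floorRatio M j ≤ K * ((j + 1) * (1 / 2) ^ j) := by
  obtain ⟨K, hK⟩ := tendsto_centralBinom.bddAbove_range
  refine ⟨max K 1, by positivity, fun M j => ?_⟩
  rcases le_or_gt j M with hj | hj
  · rw [floorRatio_eq hj]
    have h1 : ((2 * M).choose M : ℝ) * √(M + 1) / 4 ^ M ≤ max K 1 :=
      (hK ⟨M, rfl⟩).trans (le_max_left _ _)
    calc (j + 1 : ℝ) * ((2 * M - j).choose M * √(M + 1) / 4 ^ M)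
        ≤ (j + 1) * ((2 * M).choose M * (1 / 2) ^ j * √(M + 1) / 4 ^ M) := by
          gcongr
          exact choose_two_mul_sub_le hj
      _ = (2 * M).choose M * √(M + 1) / 4 ^ M * ((j + 1) * (1 / 2) ^ j) := by ring
      _ ≤ _ := by gcongr
  · rw [floorRatio, floorCount_eq_zero_of_lt (by omega)]
    simp only [Nat.cast_zero, zero_mul, zero_div]
    positivity

open MeasureTheory in
/-- The centered two-point law with variance one and `ℙ(X = 2) = 1 / 5`. -/
noncomputable def twoPointLaw : Measure ℝ :=
  ENNReal.ofReal (4 / 5) • Measure.dirac (-(1 / 2)) + ENNReal.ofReal (1 / 5) • Measure.dirac 2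

instance : MeasureTheory.IsProbabilityMeasure twoPointLaw where
  measure_univ := by
    simp only [twoPointLaw, MeasureTheory.Measure.coe_add, MeasureTheory.Measure.coe_smul,
      Pi.add_apply, Pi.smul_apply, MeasureTheory.measure_univ, smul_eq_mul, mul_one]
    rw [← ENNReal.ofReal_add (by norm_num) (by norm_num)]
    norm_num

lemma integral_twoPointLaw {E : Type*} [NormedAddCommGroup E] [NormedSpace ℝ E] [CompleteSpace E]
    (f : ℝ → E) :
    ∫ x, f x ∂twoPointLaw = (4 / 5 : ℝ) • f (-(1 / 2)) + (1 / 5 : ℝ) • f 2 := by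
  rw [twoPointLaw, MeasureTheory.integral_add_measure, MeasureTheory.integral_smul_measure,
    MeasureTheory.integral_smul_measure, MeasureTheory.integral_dirac,
    MeasureTheory.integral_dirac, ENNReal.toReal_ofReal (by norm_num),
    ENNReal.toReal_ofReal (by norm_num)]
  · exact (MeasureTheory.integrable_dirac (by simp)).smul_measure ENNReal.ofReal_ne_top
  · exact (MeasureTheory.integrable_dirac (by simp)).smul_measure ENNReal.ofReal_ne_top

lemma charFun_twoPointLaw (s : ℝ) :
    MeasureTheory.charFun twoPointLaw s =
      4 / 5 * Complex.exp (-(s / 2) * Complex.I) + 1 / 5 * Complex.exp (2 * s * Complex.I) := by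
  rw [MeasureTheory.charFun_apply_real, integral_twoPointLaw]
  simp only [Complex.real_smul]
  push_cast
  congr 3 <;> ring_nf

lemma tendsto_charFun_twoPointLaw_pow (s : ℝ) :
    Tendsto (fun n : ℕ => MeasureTheory.charFun twoPointLaw ((√n)⁻¹ * s) ^ n) atTop
      (𝓝 (Complex.exp (-s ^ 2 / 2))) := by
  have h := ProbabilityTheory.tendsto_charFun_inv_sqrt_mul_pow (P := twoPointLaw) (X := id)
    aemeasurable_id (by rw [integral_twoPointLaw]; norm_num)
    (by rw [integral_twoPointLaw]; norm_num) s
  simpa using h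

/-- The probability that a binomial variable with parameters `d` and `1 / 5` equals `t`. -/
noncomputable def binomialWeight (d t : ℕ) : ℝ := d.choose t * 4 ^ (d - t) / 5 ^ d

lemma binomialWeight_nonneg (d t : ℕ) : 0 ≤ binomialWeight d t := by
  unfold binomialWeight; positivity

lemma sum_binomialWeight (d : ℕ) : ∑ t ∈ Finset.range (d + 1), binomialWeight d t = 1 := by
  have h := add_pow (1 : ℝ) 4 d
  simp only [binomialWeight]
  rw [← Finset.sum_div, div_eq_one_iff_eq (by positivity), show (5 : ℝ) = 1 + 4 by norm_num, h]
  refine Finset.sum_congr rfl fun t _ => ?_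
  ring

open MeasureTheory in
/-- The law of `(5 T - n) / (2 √n)`, for `T` binomial with parameters `d` and `1 / 5` and
`n = d + c`. -/
noncomputable def binomialLaw (c d : ℕ) : Measure ℝ :=
  ∑ t ∈ Finset.range (d + 1), ENNReal.ofReal (binomialWeight d t) •
    Measure.dirac ((5 * t - (d + c : ℕ)) / (2 * √(d + c : ℕ)))

instance (c d : ℕ) : MeasureTheory.IsProbabilityMeasure (binomialLaw c d) where
  measure_univ := by
    simp only [binomialLaw, MeasureTheory.Measure.coe_finsetSum,
      MeasureTheory.Measure.coe_smul, Finset.sum_apply, Pi.smul_apply,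
      MeasureTheory.measure_univ, smul_eq_mul, mul_one]
    rw [← ENNReal.ofReal_sum_of_nonneg fun t _ => binomialWeight_nonneg d t, sum_binomialWeight,
      ENNReal.ofReal_one]

lemma binomialLaw_real_Iic (c d : ℕ) (hd : 0 < d) (x : ℝ) :
    (binomialLaw c d).real (Set.Iic x) = ∑ t ∈ Finset.range (d + 1),
      if (t : ℝ) ≤ (d + c : ℕ) / 5 + x * (2 * √(d + c : ℕ) / 5) then binomialWeight d t else 0 := by
  have hs : 0 < √((d + c : ℕ) : ℝ) := Real.sqrt_pos.2 (by exact_mod_cast (by omega))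
  rw [MeasureTheory.measureReal_def]
  simp only [binomialLaw, MeasureTheory.Measure.coe_finsetSum,
    MeasureTheory.Measure.coe_smul, Finset.sum_apply, Pi.smul_apply, smul_eq_mul]
  rw [ENNReal.toReal_sum (fun t _ => ENNReal.mul_ne_top ENNReal.ofReal_ne_top
    (MeasureTheory.measure_ne_top _ _))]
  refine Finset.sum_congr rfl fun t _ => ?_
  rw [ENNReal.toReal_mul, ENNReal.toReal_ofReal (binomialWeight_nonneg d t),
    MeasureTheory.Measure.dirac_apply' _ measurableSet_Iic]
  have : (5 * (t : ℝ) - (d + c : ℕ)) / (2 * √(d + c : ℕ)) ≤ x ↔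
      (t : ℝ) ≤ (d + c : ℕ) / 5 + x * (2 * √(d + c : ℕ) / 5) := by
    rw [div_le_iff₀ (by positivity)]
    constructor <;> intro h <;> linarith
  simp only [Set.indicator_apply, Set.mem_Iic, this]
  split_ifs <;> simp

lemma charFun_binomialLaw (c d : ℕ) (s : ℝ) :
    MeasureTheory.charFun (binomialLaw c d) s =
      Complex.exp (-(((√(d + c : ℕ))⁻¹ * s : ℝ) * c / 2) * Complex.I) *
        MeasureTheory.charFun twoPointLaw ((√(d + c : ℕ))⁻¹ * s) ^ d := by
  rw [MeasureTheory.charFun_apply_real, binomialLaw,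
    MeasureTheory.integral_finsetSum_measure
      (fun t _ => (MeasureTheory.integrable_dirac (by simp)).smul_measure ENNReal.ofReal_ne_top),
    charFun_twoPointLaw]
  set u : ℝ := (√(d + c : ℕ))⁻¹ * s with hu
  rw [add_comm (4 / 5 * _), add_pow, Finset.mul_sum]
  refine Finset.sum_congr rfl fun t ht => ?_
  rw [MeasureTheory.integral_smul_measure, MeasureTheory.integral_dirac,
    ENNReal.toReal_ofReal (binomialWeight_nonneg d t), Complex.real_smul]
  have htd : t ≤ d := by rw [Finset.mem_range] at ht; omega
  obtain ⟨e, rfl⟩ : ∃ e, d = t + e := ⟨d - t, by omega⟩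
  have hexp : Complex.exp (s * (((5 * (t : ℝ) - (t + e + c : ℕ)) / (2 * √(t + e + c : ℕ)) : ℝ) : ℂ)
      * Complex.I) = Complex.exp (-(u * c / 2) * Complex.I) *
        (Complex.exp (2 * u * Complex.I) ^ t * Complex.exp (-(u / 2) * Complex.I) ^ e) := by
    rw [← Complex.exp_nat_mul, ← Complex.exp_nat_mul, ← Complex.exp_add, ← Complex.exp_add, hu]
    congr 1
    push_cast
    ring
  rw [hexp, binomialWeight, Nat.add_sub_cancel_left, mul_pow, mul_pow, div_pow, div_pow]
  push_cast
  rw [pow_add, one_pow]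
  field_simp

lemma tendsto_charFun_binomialLaw (c : ℕ) (s : ℝ) :
    Tendsto (fun d => MeasureTheory.charFun (binomialLaw c d) s) atTop
      (𝓝 (Complex.exp (-s ^ 2 / 2))) := by
  have hu : Tendsto (fun d : ℕ => (√(d + c : ℕ))⁻¹ * s) atTop (𝓝 0) := by
    have : Tendsto (fun n : ℕ => (√(n : ℝ))⁻¹ * s) atTop (𝓝 (0 * s)) :=
      (tendsto_inv_atTop_zero.comp (Real.tendsto_sqrt_atTop.comp
        tendsto_natCast_atTop_atTop)).mul_const s
    rw [zero_mul] at this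
    exact this.comp (tendsto_add_atTop_nat c)
  have hφ : Tendsto (fun d : ℕ => MeasureTheory.charFun twoPointLaw ((√(d + c : ℕ))⁻¹ * s)) atTop
      (𝓝 1) := by
    have hc : Continuous fun s : ℝ => MeasureTheory.charFun twoPointLaw s := by
      simp only [charFun_twoPointLaw]
      fun_prop
    simpa [Function.comp_def] using (hc.tendsto 0).comp hu
  have hpow := (tendsto_charFun_twoPointLaw_pow s).comp (tendsto_add_atTop_nat c)
  have hexp : Tendsto (fun d : ℕ => Complex.exp (-(((√(d + c : ℕ))⁻¹ * s : ℝ) * c / 2) * Complex.I))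
      atTop (𝓝 1) := by
    have hc : Continuous fun s : ℝ => Complex.exp (-(s * c / 2) * Complex.I) := by fun_prop
    simpa [Function.comp_def] using (hc.tendsto 0).comp hu
  have h := hexp.mul (hpow.div (hφ.pow c) (by simp))
  simp only [one_pow, div_one, one_mul] at h
  refine h.congr' ?_
  filter_upwards [hφ.eventually_ne one_ne_zero] with d hd
  rw [charFun_binomialLaw]
  simp only [Pi.div_apply, Function.comp_apply]
  rw [pow_add, mul_div_cancel_right₀ _ (pow_ne_zero c hd)]

lemma tendsto_binomialLaw_Iic (c : ℕ) (x : ℝ) :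
    Tendsto (fun d => (binomialLaw c d).real (Set.Iic x)) atTop
      (𝓝 ((ProbabilityTheory.gaussianReal 0 1).real (Set.Iic x))) := by
  let μ : ℕ → MeasureTheory.ProbabilityMeasure ℝ := fun d => ⟨binomialLaw c d, inferInstance⟩
  let γ : MeasureTheory.ProbabilityMeasure ℝ := ⟨ProbabilityTheory.gaussianReal 0 1, inferInstance⟩
  have h : Tendsto μ atTop (𝓝 γ) := by
    refine MeasureTheory.ProbabilityMeasure.tendsto_iff_tendsto_charFun.2 fun s => ?_
    have := tendsto_charFun_binomialLaw c s
    simpa [μ, γ, ProbabilityTheory.charFun_gaussianReal, neg_div] using this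
  have := ProbabilityTheory.nullSingletonClass_gaussianReal (μ := 0) (v := 1) one_ne_zero
  have h' := MeasureTheory.ProbabilityMeasure.tendsto_measure_of_null_frontier_of_tendsto' h
    (E := Set.Iic x) (by simp [γ])
  exact (ENNReal.tendsto_toReal (MeasureTheory.measure_ne_top _ _)).comp h'

lemma gaussianReal_real_Iic (x : ℝ) :
    (ProbabilityTheory.gaussianReal 0 1).real (Set.Iic x) =
      (1 / Real.sqrt (2 * Real.pi)) * ∫ t in Set.Iic x, Real.exp (-t ^ 2 / 2) := by
  rw [MeasureTheory.measureReal_def,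
    ProbabilityTheory.gaussianReal_apply_eq_integral 0 one_ne_zero, ENNReal.toReal_ofReal
      (MeasureTheory.integral_nonneg fun t => ProbabilityTheory.gaussianPDFReal_nonneg 0 1 t),
    ← MeasureTheory.integral_const_mul]
  simp [ProbabilityTheory.gaussianPDFReal]

/-- `(4 / 5) ^ (j + 1)` times the probability that a binomial variable with parameters
`N - 1 - j` and `1 / 5` equals `t`, when `j < N` and `t ≤ N - 1 - j`. -/
noncomputable def topWeight (N j t : ℕ) : ℝ := (N - 1 - j).choose t * 4 ^ (N - t) / 5 ^ N

/-- `((N + 1) / (N - t + 1)) ^ (3 / 2)`. -/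
noncomputable def sizeRatio (N t : ℕ) : ℝ :=
  ((N + 1) * √(N + 1)) / (((N - t : ℕ) + 1) * √((N - t : ℕ) + 1))

lemma topWeight_nonneg (N j t : ℕ) : 0 ≤ topWeight N j t := by
  unfold topWeight; positivity

lemma sizeRatio_nonneg (N t : ℕ) : 0 ≤ sizeRatio N t := by
  unfold sizeRatio; positivity

lemma sum_choose_mul_pow {d N : ℕ} (hd : d ≤ N) (y : ℝ) :
    ∑ t ∈ Finset.range (N + 1), (d.choose t : ℝ) * y ^ (N - t) = y ^ (N - d) * (y + 1) ^ d := by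
  have hsub : Finset.range (d + 1) ⊆ Finset.range (N + 1) := by
    intro t; simp only [Finset.mem_range]; omega
  rw [← Finset.sum_subset hsub, add_comm y, add_pow, Finset.mul_sum]
  · refine Finset.sum_congr rfl fun t ht => ?_
    rw [Finset.mem_range] at ht
    rw [show N - t = (N - d) + (d - t) by omega, pow_add]
    ring
  · intro t _ ht
    rw [Finset.mem_range] at ht
    rw [Nat.choose_eq_zero_of_lt (by omega)]
    simp

lemma sum_choose_mul_pow_le {d N : ℕ} (hd : d ≤ N) {y : ℝ} (hy : 0 ≤ y) :
    ∑ t ∈ Finset.range (N + 1), (d.choose t : ℝ) * y ^ (N - t) ≤ (y + 1) ^ N := by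
  rw [sum_choose_mul_pow hd]
  calc y ^ (N - d) * (y + 1) ^ d ≤ (y + 1) ^ (N - d) * (y + 1) ^ d := by gcongr; linarith
    _ = (y + 1) ^ N := by rw [← pow_add]; congr 1; omega

lemma sum_topWeight_le (N j : ℕ) : ∑ t ∈ Finset.range (N + 1), topWeight N j t ≤ 1 := by
  simp only [topWeight]
  rw [← Finset.sum_div, div_le_one (by positivity)]
  have := sum_choose_mul_pow_le (show N - 1 - j ≤ N by omega) (show (0 : ℝ) ≤ 4 by norm_num)
  norm_num at this ⊢
  exact this

lemma sum_topWeight_div_two_pow_le (N j : ℕ) :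
    ∑ t ∈ Finset.range (N + 1), topWeight N j t / 2 ^ (N - t) ≤ (3 / 5) ^ N := by
  have h := sum_choose_mul_pow_le (show N - 1 - j ≤ N by omega) (show (0 : ℝ) ≤ 2 by norm_num)
  have e : ∀ t, topWeight N j t / 2 ^ (N - t) = (N - 1 - j).choose t * 2 ^ (N - t) / 5 ^ N := by
    intro t
    have : (4 : ℝ) ^ (N - t) = 2 ^ (N - t) * 2 ^ (N - t) := by rw [← mul_pow]; norm_num
    rw [topWeight, this]
    field_simp
  simp only [e]
  rw [← Finset.sum_div, div_pow]
  norm_num at h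
  gcongr

/-- The exponentially small total weight of the entries with few bottom points. -/
noncomputable def tailBound (N : ℕ) : ℝ := ((N : ℝ) + 1) ^ 2 * (9 / 10) ^ N

lemma tendsto_tailBound : Tendsto tailBound atTop (𝓝 0) := by
  have h := fun k : ℕ => tendsto_pow_const_mul_const_pow_of_lt_one k
    (show (0 : ℝ) ≤ 9 / 10 by norm_num) (by norm_num)
  have := ((h 2).add ((h 1).const_mul 2)).add (h 0)
  simp only [mul_zero, add_zero] at this
  refine this.congr fun N => ?_
  rw [tailBound]
  ring

lemma sizeRatio_le {N t : ℕ} (ht : t ≤ N) :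
    sizeRatio N t ≤ 3 + ((N : ℝ) + 1) ^ 2 * (3 / 2) ^ N / 2 ^ (N - t) := by
  obtain ⟨M, rfl⟩ : ∃ M, N = t + M := ⟨N - t, by omega⟩
  rw [sizeRatio, Nat.add_sub_cancel_left]
  set x : ℝ := ((t + M : ℕ) : ℝ) + 1 with hx
  have hx0 : 0 < x := by positivity
  have hx1 : 1 ≤ x := le_add_of_nonneg_left (by positivity)
  have hsx : √x ≤ x := Real.sqrt_le_iff.2 ⟨hx0.le, by nlinarith⟩
  have hM0 : (0 : ℝ) < (M : ℝ) + 1 := by positivity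
  rcases le_or_gt x (2 * ((M : ℝ) + 1)) with h | h
  · have h1 : x * √x / (((M : ℝ) + 1) * √((M : ℝ) + 1)) ≤ 3 := by
      rw [div_le_iff₀ (by positivity)]
      have h2 : √x ≤ 3 / 2 * √((M : ℝ) + 1) := by
        rw [Real.sqrt_le_left (by positivity), mul_pow, Real.sq_sqrt hM0.le]
        linarith
      calc x * √x ≤ (2 * ((M : ℝ) + 1)) * (3 / 2 * √((M : ℝ) + 1)) := by gcongr
        _ = _ := by ring
    have : 0 ≤ x ^ 2 * (3 / 2) ^ (t + M) / 2 ^ M := by positivity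
    linarith
  · have h1 : x * √x / (((M : ℝ) + 1) * √((M : ℝ) + 1)) ≤ x ^ 2 := by
      rw [div_le_iff₀ (by positivity)]
      have h3 : 1 ≤ √((M : ℝ) + 1) := Real.one_le_sqrt.2 (by simp)
      have h4 : (1 : ℝ) ≤ (M : ℝ) + 1 := by simp
      have h5 : 1 ≤ ((M : ℝ) + 1) * √((M : ℝ) + 1) := by nlinarith
      calc x * √x ≤ x * x * 1 := by rw [mul_one]; gcongr
        _ ≤ x ^ 2 * (((M : ℝ) + 1) * √((M : ℝ) + 1)) := by rw [sq]; gcongr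
    have h2 : (2 : ℝ) ^ M ≤ (3 / 2) ^ (t + M) := by
      have hM : M ≤ t := by
        have : (2 * M : ℝ) ≤ (t + M : ℕ) := by rw [hx] at h; linarith
        have : 2 * M ≤ t + M := by exact_mod_cast this
        omega
      calc (2 : ℝ) ^ M ≤ ((3 / 2) * (3 / 2)) ^ M := by gcongr; norm_num
        _ = (3 / 2) ^ (M + M) := by rw [mul_pow, pow_add]
        _ ≤ (3 / 2) ^ (t + M) := by gcongr; norm_num
    have h3 : x ^ 2 ≤ x ^ 2 * (3 / 2) ^ (t + M) / 2 ^ M := by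
      rw [mul_div_assoc]
      exact le_mul_of_one_le_right (by positivity) ((one_le_div (by positivity)).2 h2)
    linarith

lemma sum_tail_le (N j : ℕ) :
    ∑ t ∈ Finset.range (N + 1),
      topWeight N j t * (((N : ℝ) + 1) ^ 2 * (3 / 2) ^ N / 2 ^ (N - t)) ≤ tailBound N := by
  calc _ = (((N : ℝ) + 1) ^ 2 * (3 / 2) ^ N) *
        ∑ t ∈ Finset.range (N + 1), topWeight N j t / 2 ^ (N - t) := by
        rw [Finset.mul_sum]
        exact Finset.sum_congr rfl fun t _ => by ring
    _ ≤ (((N : ℝ) + 1) ^ 2 * (3 / 2) ^ N) * (3 / 5) ^ N := by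
        gcongr
        exact sum_topWeight_div_two_pow_le N j
    _ = tailBound N := by
        rw [tailBound, mul_assoc, ← mul_pow]
        norm_num

lemma sum_topWeight_mul_sizeRatio_le (N j : ℕ) :
    ∑ t ∈ Finset.range (N + 1), topWeight N j t * sizeRatio N t ≤ 3 + tailBound N := by
  calc _ ≤ ∑ t ∈ Finset.range (N + 1), (3 * topWeight N j t +
        topWeight N j t * (((N : ℝ) + 1) ^ 2 * (3 / 2) ^ N / 2 ^ (N - t))) := by
        refine Finset.sum_le_sum fun t ht => ?_
        rw [Finset.mem_range] at ht
        have := mul_le_mul_of_nonneg_left (sizeRatio_le (show t ≤ N by omega))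
          (topWeight_nonneg N j t)
        linarith
    _ ≤ 3 + tailBound N := by
        rw [Finset.sum_add_distrib, ← Finset.mul_sum]
        have := sum_topWeight_le N j
        have := sum_tail_le N j
        linarith

lemma sum_mul_topWeight (f : ℕ → ℝ) (d j : ℕ) :
    ∑ t ∈ Finset.range (d + (j + 1) + 1), f t * topWeight (d + (j + 1)) j t =
      (4 / 5) ^ (j + 1) * ∑ t ∈ Finset.range (d + 1), f t * binomialWeight d t := by
  have hsub : Finset.range (d + 1) ⊆ Finset.range (d + (j + 1) + 1) := by
    intro t; simp only [Finset.mem_range]; omega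
  have e : d + (j + 1) - 1 - j = d := by omega
  rw [← Finset.sum_subset hsub, Finset.mul_sum]
  · refine Finset.sum_congr rfl fun t ht => ?_
    rw [Finset.mem_range] at ht
    rw [topWeight, binomialWeight, e, show d + (j + 1) - t = (d - t) + (j + 1) by omega, div_pow,
      pow_add, pow_add]
    field_simp
    ring
  · intro t _ ht
    rw [Finset.mem_range] at ht
    rw [topWeight, e, Nat.choose_eq_zero_of_lt (by omega)]
    simp

lemma sum_sq_binomialWeight (d : ℕ) :
    ∑ t ∈ Finset.range (d + 1), ((t : ℝ) - d / 5) ^ 2 * binomialWeight d t = (4 / 25 : ℝ) * (d : ℝ) := by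
  have h := congrArg (Polynomial.eval (1 / 5)) (bernsteinPolynomial.variance ℝ d)
  simp only [Polynomial.eval_finsetSum, bernsteinPolynomial, Polynomial.eval_mul,
    Polynomial.eval_pow, Polynomial.eval_sub, Polynomial.eval_X, Polynomial.eval_one,
    Polynomial.eval_natCast, nsmul_eq_mul] at h
  rw [show (4 / 25 : ℝ) * (d : ℝ) = d * (1 / 5) * (1 - 1 / 5) by ring]
  rw [← h]
  refine Finset.sum_congr rfl fun t ht => ?_
  rw [Finset.mem_range] at ht
  obtain ⟨e, rfl⟩ : ∃ e, d = t + e := ⟨d - t, by omega⟩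
  rw [binomialWeight, Nat.add_sub_cancel_left, pow_add]
  norm_num
  simp only [div_pow]
  field_simp
  ring

lemma sum_sq_topWeight_le (d j : ℕ) :
    ∑ t ∈ Finset.range (d + (j + 1) + 1), ((t : ℝ) - (d + (j + 1) : ℕ) / 5) ^ 2 *
      topWeight (d + (j + 1)) j t ≤ 2 * ((d + (j + 1) : ℕ) : ℝ) + ((j : ℝ) + 1) ^ 2 := by
  rw [sum_mul_topWeight]
  have h0 : (4 / 5 : ℝ) ^ (j + 1) ≤ 1 := pow_le_one₀ (by norm_num) (by norm_num)
  have h1 : ∑ t ∈ Finset.range (d + 1), ((t : ℝ) - (d + (j + 1) : ℕ) / 5) ^ 2 *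
      binomialWeight d t ≤ 2 * ((d + (j + 1) : ℕ) : ℝ) + ((j : ℝ) + 1) ^ 2 := by
    calc _ ≤ ∑ t ∈ Finset.range (d + 1), (2 * (((t : ℝ) - d / 5) ^ 2 * binomialWeight d t) +
          ((j : ℝ) + 1) ^ 2 * binomialWeight d t) := by
          refine Finset.sum_le_sum fun t _ => ?_
          have hw := binomialWeight_nonneg d t
          have : ((t : ℝ) - (d + (j + 1) : ℕ) / 5) ^ 2 ≤
              2 * ((t : ℝ) - d / 5) ^ 2 + (j + 1) ^ 2 := by
            push_cast
            nlinarith [sq_nonneg (((t : ℝ) - d / 5) + (j + 1) / 5), sq_nonneg ((j : ℝ) + 1)]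
          calc _ ≤ (2 * ((t : ℝ) - d / 5) ^ 2 + (j + 1) ^ 2) * binomialWeight d t := by gcongr
            _ = _ := by ring
      _ = 2 * ((4 / 25 : ℝ) * (d : ℝ)) + ((j : ℝ) + 1) ^ 2 := by
          rw [Finset.sum_add_distrib, ← Finset.mul_sum, ← Finset.mul_sum, sum_sq_binomialWeight,
            sum_binomialWeight, mul_one]
      _ ≤ _ := by
          push_cast
          have : (0 : ℝ) ≤ d := by positivity
          have : (0 : ℝ) ≤ j := by positivity
          linarith
  refine le_trans ?_ h1
  exact mul_le_of_le_one_left (Finset.sum_nonneg fun t _ =>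
    mul_nonneg (sq_nonneg _) (binomialWeight_nonneg d t)) h0

/-- The limit of `floorRatio M j` as `M` grows. -/
noncomputable def floorLimit (j : ℕ) : ℝ := (j + 1) * ((√Real.pi)⁻¹ * (1 / 2) ^ j)

lemma floorLimit_pos (j : ℕ) : 0 < floorLimit j := by
  have := Real.pi_pos
  unfold floorLimit; positivity

lemma tendsto_floorRatio_mul_sizeRatio (j : ℕ) :
    Tendsto (fun p : ℕ × ℕ => floorRatio (p.1 - p.2) j * sizeRatio p.1 p.2)
      (comap (fun p : ℕ × ℕ => ((p.2 : ℝ) / p.1, p.1)) (𝓝 (1 / 5) ×ˢ atTop))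
      (𝓝 (floorLimit j * (5 / 4 * √(5 / 4)))) := by
  set l := comap (fun p : ℕ × ℕ => ((p.2 : ℝ) / p.1, p.1)) (𝓝 (1 / 5) ×ˢ atTop) with hl
  have h1 : Tendsto (fun p : ℕ × ℕ => (p.2 : ℝ) / p.1) l (𝓝 (1 / 5)) :=
    tendsto_fst.comp tendsto_comap
  have h2 : Tendsto (fun p : ℕ × ℕ => p.1) l atTop := tendsto_snd.comp tendsto_comap
  have h2' : Tendsto (fun p : ℕ × ℕ => (p.1 : ℝ)) l atTop :=
    tendsto_natCast_atTop_atTop.comp h2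
  have hpos : ∀ᶠ p : ℕ × ℕ in l, 0 < p.1 := h2.eventually (eventually_gt_atTop 0)
  have h3 : Tendsto (fun p : ℕ × ℕ => p.1 - p.2) l atTop := by
    rw [← tendsto_natCast_atTop_iff (R := ℝ)]
    have h4 := h2'.atTop_mul_pos (show (0 : ℝ) < 1 - 1 / 5 by norm_num) (h1.const_sub 1)
    refine tendsto_atTop_mono' l ?_ h4
    filter_upwards [hpos] with p hp
    have hp' : (p.1 : ℝ) ≠ 0 := by positivity
    have : (p.1 : ℝ) ≤ (p.1 - p.2 : ℕ) + (p.2 : ℝ) := by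
      exact_mod_cast (show p.1 ≤ p.1 - p.2 + p.2 by omega)
    rw [mul_sub, mul_one, mul_div_cancel₀ _ hp']
    linarith
  refine ((tendsto_floorRatio j).comp h3).mul ?_
  have hr : Tendsto (fun p : ℕ × ℕ => (1 + (p.1 : ℝ)⁻¹) / (1 - (p.2 : ℝ) / p.1 + (p.1 : ℝ)⁻¹))
      l (𝓝 (5 / 4)) := by
    have h5 := h2'.inv_tendsto_atTop
    have := (h5.const_add 1).div ((h1.const_sub 1).add h5) (by norm_num)
    norm_num at this
    exact this
  refine (hr.mul hr.sqrt).congr' ?_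
  have hlt : ∀ᶠ p : ℕ × ℕ in l, (p.2 : ℝ) / p.1 < 1 :=
    h1.eventually (gt_mem_nhds (by norm_num))
  filter_upwards [hpos, hlt] with p hp hp1
  have hp0 : (0 : ℝ) < p.1 := by positivity
  rw [div_lt_one hp0] at hp1
  have hle : p.2 ≤ p.1 := by exact_mod_cast hp1.le
  have e : (1 + (p.1 : ℝ)⁻¹) / (1 - (p.2 : ℝ) / p.1 + (p.1 : ℝ)⁻¹) =
      ((p.1 : ℝ) + 1) / ((p.1 - p.2 : ℕ) + 1) := by
    have h6 : (p.1 : ℝ) - p.2 + 1 ≠ 0 := by linarith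
    have h7 : 1 - (p.2 : ℝ) / p.1 + (p.1 : ℝ)⁻¹ = ((p.1 : ℝ) - p.2 + 1) / p.1 := by
      field_simp
    rw [Nat.cast_sub hle, h7]
    field_simp
  rw [e, sizeRatio, Real.sqrt_div (by positivity), div_mul_div_comm]

lemma exists_abs_floorRatio_mul_sizeRatio_sub_lt (j : ℕ) {ε : ℝ} (hε : 0 < ε) :
    ∃ δ > 0, ∀ᶠ N : ℕ in atTop, ∀ t : ℕ, |(t : ℝ) / N - 1 / 5| < δ →
      |floorRatio (N - t) j * sizeRatio N t - floorLimit j * (5 / 4 * √(5 / 4))| < ε := by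
  have h := Metric.tendsto_nhds.1 (tendsto_floorRatio_mul_sizeRatio j) ε hε
  rw [eventually_comap] at h
  obtain ⟨p, hp, q, hq, hpq⟩ := eventually_prod_iff.1 h
  obtain ⟨δ, hδ, hpδ⟩ := Metric.eventually_nhds_iff.1 hp
  refine ⟨δ, hδ, ?_⟩
  filter_upwards [hq] with N hN t ht
  exact hpq (hpδ (by rwa [Real.dist_eq])) hN (N, t) rfl

lemma tendsto_sum_topWeight_mul_abs (j : ℕ) :
    Tendsto (fun N : ℕ => ∑ t ∈ Finset.range (N + 1), topWeight N j t *
      |floorRatio (N - t) j * sizeRatio N t - floorLimit j * (5 / 4 * √(5 / 4))|)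
      atTop (𝓝 0) := by
  obtain ⟨K, hK, hbound⟩ := exists_floorRatio_le
  set A : ℝ := K * ((j + 1) * (1 / 2) ^ j) with hA
  have hA0 : 0 ≤ A := by positivity
  set c : ℝ := floorLimit j * (5 / 4 * √(5 / 4)) with hc
  have hc0 : 0 ≤ c := mul_nonneg (floorLimit_pos j).le (by positivity)
  refine Metric.tendsto_nhds.2 fun ε hε => ?_
  obtain ⟨δ, hδ, hev⟩ := exists_abs_floorRatio_mul_sizeRatio_sub_lt j (half_pos hε)
  have hlim : Tendsto (fun N : ℕ => (3 * A + c) / δ ^ 2 * ((2 * (N : ℝ) + ((j : ℝ) + 1) ^ 2) /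
      (N : ℝ) ^ 2) + A * tailBound N) atTop (𝓝 0) := by
    have h1 : Tendsto (fun N : ℕ => (N : ℝ)⁻¹) atTop (𝓝 0) :=
      tendsto_inv_atTop_zero.comp tendsto_natCast_atTop_atTop
    have h2 := (h1.const_mul 2).add ((h1.pow 2).const_mul (((j : ℝ) + 1) ^ 2))
    have h3 := (h2.const_mul ((3 * A + c) / δ ^ 2)).add (tendsto_tailBound.const_mul A)
    simp only [mul_zero, add_zero, zero_pow (two_ne_zero)] at h3
    refine h3.congr' ?_
    filter_upwards [eventually_gt_atTop 0] with N hN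
    have : (N : ℝ) ≠ 0 := by positivity
    field_simp
  filter_upwards [hev, eventually_ge_atTop (j + 1), hlim.eventually (gt_mem_nhds (half_pos hε))]
    with N hN hjN hsmall
  have hN0 : (0 : ℝ) < N := by exact_mod_cast (show 0 < N by omega)
  have hpt : ∀ t ∈ Finset.range (N + 1), topWeight N j t *
      |floorRatio (N - t) j * sizeRatio N t - c| ≤
      ε / 2 * topWeight N j t + (3 * A + c) / (δ ^ 2 * (N : ℝ) ^ 2) *
        (((t : ℝ) - N / 5) ^ 2 * topWeight N j t) +
        A * (topWeight N j t * (((N : ℝ) + 1) ^ 2 * (3 / 2) ^ N / 2 ^ (N - t))) := by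
    intro t ht
    rw [Finset.mem_range] at ht
    have key : |floorRatio (N - t) j * sizeRatio N t - c| ≤
        ε / 2 + (3 * A + c) / (δ ^ 2 * (N : ℝ) ^ 2) * ((t : ℝ) - N / 5) ^ 2 +
          A * (((N : ℝ) + 1) ^ 2 * (3 / 2) ^ N / 2 ^ (N - t)) := by
      have e3 : 0 ≤ A * (((N : ℝ) + 1) ^ 2 * (3 / 2) ^ N / 2 ^ (N - t)) := by positivity
      rcases lt_or_ge |(t : ℝ) / N - 1 / 5| δ with h | h
      · have e2 : 0 ≤ (3 * A + c) / (δ ^ 2 * (N : ℝ) ^ 2) * ((t : ℝ) - N / 5) ^ 2 := by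
          positivity
        have := hN t h
        linarith
      · have e2 : 3 * A + c ≤ (3 * A + c) / (δ ^ 2 * (N : ℝ) ^ 2) * ((t : ℝ) - N / 5) ^ 2 := by
          have h4 : (t : ℝ) - N / 5 = ((t : ℝ) / N - 1 / 5) * N := by field_simp
          have h5 : δ ^ 2 ≤ ((t : ℝ) / N - 1 / 5) ^ 2 := by
            rw [← sq_abs ((t : ℝ) / N - 1 / 5)]
            gcongr
          rw [div_mul_eq_mul_div, le_div_iff₀ (by positivity), h4, mul_pow]
          gcongr
        have h6 : floorRatio (N - t) j * sizeRatio N t ≤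
            A * (3 + ((N : ℝ) + 1) ^ 2 * (3 / 2) ^ N / 2 ^ (N - t)) :=
          mul_le_mul (hbound _ _) (sizeRatio_le (by omega)) (sizeRatio_nonneg _ _) hA0
        have h7 : 0 ≤ floorRatio (N - t) j * sizeRatio N t :=
          mul_nonneg (floorRatio_nonneg _ _) (sizeRatio_nonneg _ _)
        rw [abs_le]
        constructor <;> linarith
    have := mul_le_mul_of_nonneg_left key (topWeight_nonneg N j t)
    linarith
  have hsq : ∑ t ∈ Finset.range (N + 1), ((t : ℝ) - N / 5) ^ 2 * topWeight N j t ≤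
      2 * (N : ℝ) + ((j : ℝ) + 1) ^ 2 := by
    obtain ⟨d, rfl⟩ : ∃ d, N = d + (j + 1) := ⟨N - (j + 1), by omega⟩
    exact sum_sq_topWeight_le d j
  rw [Real.dist_eq, sub_zero, abs_of_nonneg (Finset.sum_nonneg fun t _ =>
    mul_nonneg (topWeight_nonneg N j t) (abs_nonneg _))]
  calc _ ≤ _ := Finset.sum_le_sum hpt
    _ ≤ ε / 2 * 1 + (3 * A + c) / (δ ^ 2 * (N : ℝ) ^ 2) * (2 * (N : ℝ) + ((j : ℝ) + 1) ^ 2) +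
        A * tailBound N := by
      rw [Finset.sum_add_distrib, Finset.sum_add_distrib, ← Finset.mul_sum, ← Finset.mul_sum,
        ← Finset.mul_sum]
      gcongr
      · exact sum_topWeight_le N j
      · exact sum_tail_le N j
    _ = ε / 2 + ((3 * A + c) / δ ^ 2 * ((2 * (N : ℝ) + ((j : ℝ) + 1) ^ 2) / (N : ℝ) ^ 2) +
        A * tailBound N) := by
      field_simp
      ring
    _ < ε := by linarith

/-- The normalised contribution of the permutations with `N + 1` entries and floor index `j + 1`,
weighted by a function of the number of top points. -/
noncomputable def topSum (χ : ℕ → ℝ) (N j : ℕ) : ℝ :=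
  ∑ t ∈ Finset.range (N + 1), χ t * (floorRatio (N - t) j * sizeRatio N t * topWeight N j t)

lemma tendsto_topSum {χ : ℕ → ℕ → ℝ} (hχ : ∀ N t, |χ N t| ≤ 1) {j : ℕ} {L : ℝ}
    (h : Tendsto (fun N => ∑ t ∈ Finset.range (N + 1), χ N t * topWeight N j t) atTop (𝓝 L)) :
    Tendsto (fun N => topSum (χ N) N j) atTop (𝓝 (floorLimit j * (5 / 4 * √(5 / 4)) * L)) := by
  have h1 : Tendsto (fun N => topSum (χ N) N j - floorLimit j * (5 / 4 * √(5 / 4)) *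
      ∑ t ∈ Finset.range (N + 1), χ N t * topWeight N j t) atTop (𝓝 0) := by
    refine squeeze_zero_norm (fun N => ?_) (tendsto_sum_topWeight_mul_abs j)
    rw [topSum, Finset.mul_sum, ← Finset.sum_sub_distrib]
    refine (norm_sum_le _ _).trans (Finset.sum_le_sum fun t _ => ?_)
    rw [Real.norm_eq_abs, show χ N t * (floorRatio (N - t) j * sizeRatio N t * topWeight N j t) -
      floorLimit j * (5 / 4 * √(5 / 4)) * (χ N t * topWeight N j t) = χ N t * (topWeight N j t *
        (floorRatio (N - t) j * sizeRatio N t - floorLimit j * (5 / 4 * √(5 / 4)))) by ring,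
      abs_mul, abs_mul, abs_of_nonneg (topWeight_nonneg N j t)]
    exact mul_le_of_le_one_left (mul_nonneg (topWeight_nonneg N j t) (abs_nonneg _)) (hχ N t)
  simpa using h1.add (h.const_mul (floorLimit j * (5 / 4 * √(5 / 4))))

lemma summable_succ_mul_half_pow : Summable fun j : ℕ => ((j : ℝ) + 1) * (1 / 2) ^ j := by
  have h1 := summable_pow_mul_geometric_of_norm_lt_one 1 (r := (1 / 2 : ℝ)) (by norm_num)
  have h2 := summable_geometric_of_lt_one (r := (1 / 2 : ℝ)) (by norm_num) (by norm_num)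
  refine (h1.add h2).congr fun j => ?_
  ring

lemma tendsto_sum_topSum {χ : ℕ → ℕ → ℝ} (hχ : ∀ N t, |χ N t| ≤ 1) {L : ℕ → ℝ}
    (h : ∀ j, Tendsto (fun N => ∑ t ∈ Finset.range (N + 1), χ N t * topWeight N j t) atTop
      (𝓝 (L j))) :
    Tendsto (fun N => ∑ j ∈ Finset.range (N + 1), topSum (χ N) N j) atTop
      (𝓝 (∑' j, floorLimit j * (5 / 4 * √(5 / 4)) * L j)) := by
  obtain ⟨K, hK, hbound⟩ := exists_floorRatio_le
  have hT : ∀ᶠ N in atTop, tailBound N ≤ 1 :=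
    (tendsto_tailBound.eventually (gt_mem_nhds one_pos)).mono fun _ => le_of_lt
  have hle : ∀ N j, |topSum (χ N) N j| ≤ K * (((j : ℝ) + 1) * (1 / 2) ^ j) * (3 + tailBound N) := by
    intro N j
    have hA : 0 ≤ K * (((j : ℝ) + 1) * (1 / 2) ^ j) := by positivity
    calc |topSum (χ N) N j| ≤ ∑ t ∈ Finset.range (N + 1),
          K * (((j : ℝ) + 1) * (1 / 2) ^ j) * (topWeight N j t * sizeRatio N t) := by
          refine (Finset.abs_sum_le_sum_abs _ _).trans (Finset.sum_le_sum fun t _ => ?_)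
          have h0 := mul_nonneg (topWeight_nonneg N j t) (sizeRatio_nonneg N t)
          rw [abs_mul, mul_assoc, mul_comm (sizeRatio N t), abs_mul,
            abs_of_nonneg (floorRatio_nonneg _ _), abs_of_nonneg h0]
          refine (mul_le_of_le_one_left (mul_nonneg (floorRatio_nonneg _ _) h0) (hχ N t)).trans ?_
          exact mul_le_mul_of_nonneg_right (hbound _ _) h0
      _ ≤ _ := by
          rw [← Finset.mul_sum]
          exact mul_le_mul_of_nonneg_left (sum_topWeight_mul_sizeRatio_le N j) hA
  have hmain := tendsto_tsum_of_dominated_convergence (𝓕 := atTop)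
    (f := fun N j => if j ∈ Finset.range (N + 1) then topSum (χ N) N j else 0)
    (g := fun j => floorLimit j * (5 / 4 * √(5 / 4)) * L j)
    (bound := fun j : ℕ => K * 4 * (((j : ℝ) + 1) * (1 / 2) ^ j))
    (summable_succ_mul_half_pow.mul_left (K * 4)) ?_ ?_
  · refine hmain.congr fun N => ?_
    rw [tsum_eq_sum (s := Finset.range (N + 1)) fun j hj => if_neg hj]
    exact Finset.sum_congr rfl fun j hj => if_pos hj
  · intro j
    refine (tendsto_topSum hχ (h j)).congr' ?_
    filter_upwards [eventually_ge_atTop j] with N hN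
    rw [if_pos (Finset.mem_range.2 (by omega))]
  · filter_upwards [hT] with N hN j
    have h1 : K * (((j : ℝ) + 1) * (1 / 2) ^ j) * (3 + tailBound N) ≤
        K * 4 * (((j : ℝ) + 1) * (1 / 2) ^ j) := by
      have hA : 0 ≤ K * (((j : ℝ) + 1) * (1 / 2) ^ j) := by positivity
      nlinarith
    split_ifs
    · exact (hle N j).trans h1
    · rw [norm_zero]
      positivity

/-- The indicator of the threshold in the central limit theorem for permutations of length `N + 1`. -/
noncomputable def thresholdIndicator (x : ℝ) (N t : ℕ) : ℝ :=
  if (t : ℝ) ≤ (N + 1 : ℕ) / 5 + x * (2 * √(N + 1 : ℕ) / 5) then 1 else 0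

lemma tendsto_sum_thresholdIndicator (x : ℝ) (j : ℕ) :
    Tendsto (fun N => ∑ t ∈ Finset.range (N + 1), thresholdIndicator x N t * topWeight N j t)
      atTop (𝓝 ((4 / 5) ^ (j + 1) * (ProbabilityTheory.gaussianReal 0 1).real (Set.Iic x))) := by
  rw [← tendsto_add_atTop_iff_nat (j + 1)]
  refine ((tendsto_binomialLaw_Iic (j + 2) x).const_mul ((4 / 5) ^ (j + 1))).congr' ?_
  filter_upwards [eventually_gt_atTop 0] with d hd
  rw [sum_mul_topWeight, binomialLaw_real_Iic _ _ hd]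
  simp only [thresholdIndicator, ite_mul, one_mul, zero_mul]
  rfl

lemma tendsto_sum_topWeight (j : ℕ) :
    Tendsto (fun N => ∑ t ∈ Finset.range (N + 1), (1 : ℝ) * topWeight N j t)
      atTop (𝓝 ((4 / 5) ^ (j + 1))) := by
  rw [← tendsto_add_atTop_iff_nat (j + 1)]
  refine tendsto_const_nhds.congr fun d => ?_
  rw [sum_mul_topWeight (fun _ => 1)]
  simp only [one_mul, sum_binomialWeight, mul_one]

open Classical in
lemma card_avoidsH_eq_sum {n : ℕ} (P : ℕ → Prop) :
    (Finset.univ.filter fun σ : Equiv.Perm (Fin n) => AvoidsH σ ∧ P (topPts σ)).card =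
      ∑ t ∈ Finset.range (n + 1), if P t then
        (Finset.univ.filter fun τ : Equiv.Perm (Fin n) => HasTop τ t).card else 0 := by
  rw [Finset.card_eq_sum_card_fiberwise (f := topPts) (t := Finset.range (n + 1))]
  · refine Finset.sum_congr rfl fun t _ => ?_
    rw [Finset.filter_filter]
    split_ifs with hP
    · refine Finset.card_nbij' Equiv.symm Equiv.symm ?_ ?_ (fun _ _ => Equiv.symm_symm _)
        fun _ _ => Equiv.symm_symm _
      · intro σ hσ
        simp only [Finset.coe_filter, Finset.mem_univ, true_and, Set.mem_ofPred_eq] at hσ ⊢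
        exact (avoidsH_and_topPts_iff σ t).1 ⟨hσ.1.1, hσ.2⟩
      · intro τ hτ
        simp only [Finset.coe_filter, Finset.mem_univ, true_and, Set.mem_ofPred_eq] at hτ ⊢
        obtain ⟨h1, h2⟩ := (avoidsH_and_topPts_iff τ.symm t).2 (by rwa [Equiv.symm_symm])
        exact ⟨⟨h1, h2 ▸ hP⟩, h2⟩
    · rw [Finset.card_eq_zero, Finset.filter_eq_empty_iff]
      rintro σ - ⟨⟨-, h⟩, rfl⟩
      exact hP h
  · intro σ _
    simp only [Finset.coe_range, Set.mem_Iio, topPts]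
    omega

lemma floorCount_mul_choose_eq {N j t : ℕ} (ht : t ≤ N) :
    ((floorCount (N + 1 - t) (j + 1) * (N - 1 - j).choose t : ℕ) : ℝ) =
      5 ^ N / ((N + 1) * √(N + 1)) * (floorRatio (N - t) j * sizeRatio N t * topWeight N j t) := by
  rw [show N + 1 - t = N - t + 1 by omega, Nat.cast_mul, floorCount_eq_floorRatio, sizeRatio,
    topWeight]
  have : (0 : ℝ) < √((N : ℝ) + 1) := Real.sqrt_pos.2 (by positivity)
  have : (0 : ℝ) < √(((N - t : ℕ) : ℝ) + 1) := Real.sqrt_pos.2 (by positivity)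
  field_simp

open Classical in
lemma card_avoidsH_eq_topSum (N : ℕ) (P : ℕ → Prop) :
    (Nat.card {σ : Equiv.Perm (Fin (N + 1)) // AvoidsH σ ∧ P (topPts σ)} : ℝ) =
      5 ^ N / ((N + 1) * √(N + 1)) *
        ∑ j ∈ Finset.range (N + 1), topSum (fun t => if P t then 1 else 0) N j := by
  rw [Nat.card_eq_fintype_card, Fintype.card_subtype, card_avoidsH_eq_sum, Nat.cast_sum,
    Finset.sum_range_succ]
  have hlast : (if P (N + 1) then (Finset.univ.filter fun τ : Equiv.Perm (Fin (N + 1)) =>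
      HasTop τ (N + 1)).card else 0) = 0 := by
    rw [card_hasTop (by omega) le_rfl, ite_eq_right_iff]
    intro _
    refine Finset.sum_eq_zero fun r _ => ?_
    rw [Nat.choose_eq_zero_of_lt (by omega), mul_zero]
  rw [hlast, Nat.cast_zero, add_zero]
  simp only [topSum]
  rw [Finset.sum_comm, Finset.mul_sum]
  refine Finset.sum_congr rfl fun t ht => ?_
  have ht' : t ≤ N := by rw [Finset.mem_range] at ht; omega
  split_ifs with hP
  · rw [card_hasTop (by omega) (by omega), Finset.sum_range_succ', Nat.cast_add, Nat.cast_sum,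
      show N + 1 - t = N - t + 1 by omega, floorCount_succ_zero, zero_mul, Nat.cast_zero,
      add_zero, Finset.mul_sum]
    refine Finset.sum_congr rfl fun j _ => ?_
    rw [one_mul, ← floorCount_mul_choose_eq ht', show N + 1 - t = N - t + 1 by omega,
      show N + 1 - 1 - (j + 1) = N - 1 - j by omega]
  · simp

lemma hCount_succ_eq_topSum (N : ℕ) :
    (hCount (N + 1) : ℝ) = 5 ^ N / ((N + 1) * √(N + 1)) *
      ∑ j ∈ Finset.range (N + 1), topSum (fun _ => 1) N j := by
  have := card_avoidsH_eq_topSum N fun _ => True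
  simpa [hCount] using this

open MeasureTheory in
theorem topPts_gaussian (x : ℝ) :
    Tendsto (fun n : ℕ =>
        (Nat.card {σ : Equiv.Perm (Fin n) //
            AvoidsH σ ∧ (topPts σ : ℝ) ≤ (n : ℝ) / 5 + x * (2 * Real.sqrt n / 5)} : ℝ)
          / (hCount n : ℝ))
      atTop
      (nhds ((1 / Real.sqrt (2 * Real.pi)) * ∫ t in Set.Iic x, Real.exp (-t ^ 2 / 2))) := by
  rw [← gaussianReal_real_Iic, ← tendsto_add_atTop_iff_nat 1]
  set Φ := (ProbabilityTheory.gaussianReal 0 1).real (Set.Iic x)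
  have hnum := tendsto_sum_topSum (χ := thresholdIndicator x)
    (fun N t => by unfold thresholdIndicator; split_ifs <;> simp)
    (tendsto_sum_thresholdIndicator x)
  have hden := tendsto_sum_topSum (χ := fun _ _ => 1) (fun _ _ => by simp) tendsto_sum_topWeight
  set D := ∑' j, floorLimit j * (5 / 4 * √(5 / 4)) * (4 / 5) ^ (j + 1) with hD
  have hnum_eq : ∑' j, floorLimit j * (5 / 4 * √(5 / 4)) * ((4 / 5) ^ (j + 1) * Φ) = D * Φ := by
    rw [hD, ← tsum_mul_right]
    exact tsum_congr fun j => by ring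
  have hDpos : 0 < D := by
    have hterm : ∀ j, 0 < floorLimit j * (5 / 4 * √(5 / 4)) * (4 / 5) ^ (j + 1) := fun j =>
      mul_pos (mul_pos (floorLimit_pos j) (by positivity)) (by positivity)
    refine Summable.tsum_pos ?_ (fun j => (hterm j).le) 0 (hterm 0)
    refine Summable.of_nonneg_of_le (fun j => (hterm j).le) (fun j => ?_)
      (summable_succ_mul_half_pow.mul_left ((√Real.pi)⁻¹ * (5 / 4 * √(5 / 4))))
    have h1 : (4 / 5 : ℝ) ^ (j + 1) ≤ 1 := pow_le_one₀ (by norm_num) (by norm_num)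
    refine (mul_le_of_le_one_right
      (mul_nonneg (floorLimit_pos j).le (by positivity)) h1).trans_eq ?_
    rw [floorLimit]
    ring
  rw [hnum_eq] at hnum
  have hdiv := hnum.div hden hDpos.ne'
  rw [mul_div_cancel_left₀ _ hDpos.ne'] at hdiv
  refine hdiv.congr fun N => ?_
  rw [hCount_succ_eq_topSum, card_avoidsH_eq_topSum N fun t =>
    (t : ℝ) ≤ (N + 1 : ℕ) / 5 + x * (2 * Real.sqrt (N + 1 : ℕ) / 5), mul_div_mul_left]
  · congr! 5
  · have : (0 : ℝ) < √((N : ℝ) + 1) := Real.sqrt_pos.2 (by positivity)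
    positivity
end

section
/- Every permutation σ of length n avoiding the patterns 4213 and 2143 admits a G-gridding: there exist j, k with 0 ≤ j, k ≤ n such that (i) σ(i) ≤ k for all i ≤ j and σ(1) < σ(2) < ⋯ < σ(j); (ii) the subsequence of entries at positions > j with values > k is increasing; and (iii) the subsequence of entries at positions > j with values ≤ k avoids the pattern 213. -/
open Filter Topology PowerSeries

section PatternOccurrences

variable {n : ℕ} {σ : Equiv.Perm (Fin n)}

theorem strictMono_vec4 {p q r s : Fin n} (hpq : p < q) (hqr : q < r) (hrs : r < s) :
    StrictMono ![p, q, r, s] := by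
  rw [Fin.strictMono_iff_lt_succ]
  intro i
  fin_cases i <;> simpa

/-- If `σ` avoids 4213, then an entry to the left of an occurrence of 213 lies below the largest
entry of that occurrence. -/
theorem PatternAvoids.lt_of_213 (h : PatternAvoids σ p4213) {p q r s : Fin n}
    (hpq : p < q) (hqr : q < r) (hrs : r < s)
    (h₁ : σ r < σ q) (h₂ : σ q < σ s) : σ p < σ s := by
  by_contra hps
  have h₃ : σ s < σ p := lt_of_le_of_ne (not_lt.1 hps)
    (σ.injective.ne (hpq.trans (hqr.trans hrs)).ne')
  refine h ⟨![p, q, r, s], strictMono_vec4 hpq hqr hrs, fun a b => ?_⟩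
  fin_cases a <;> fin_cases b <;> simp [p4213] <;> order

/-- A permutation avoiding 2143 has no occurrence of 2143 at positions `p < q < r < s`. -/
theorem PatternAvoids.not_2143 (h : PatternAvoids σ p2143) {p q r s : Fin n}
    (hpq : p < q) (hqr : q < r) (hrs : r < s)
    (h₁ : σ q < σ p) (h₂ : σ p < σ s) (h₃ : σ s < σ r) : False := by
  refine h ⟨![p, q, r, s], strictMono_vec4 hpq hqr hrs, fun a b => ?_⟩
  fin_cases a <;> fin_cases b <;> simp [p2143] <;> order

/-- If an occurrence `b a c` of 213 coexists with an inversion `y x` whose entries are at least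
`σ c`, then `y` lies to the right of `b`. -/
theorem lt_of_213_of_inversion (h4213 : PatternAvoids σ p4213)
    {a b c x y : Fin n} (hba : b < a) (hac : a < c) (hab : σ a < σ b) (hbc : σ b < σ c)
    (hxy : σ x < σ y) (hcx : σ c ≤ σ x) : b < y := by
  by_contra hby
  rcases (not_lt.1 hby).lt_or_eq with hlt | rfl
  · have := h4213.lt_of_213 hlt hba hac hab hbc
    order
  · order

/-- If an occurrence `b a c` of 213 coexists with an inversion `y x` whose entries are at least
`σ c`, then the entries up to position `b` are increasing. -/
theorem lt_of_le_of_213_of_inversion (h4213 : PatternAvoids σ p4213)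
    (h2143 : PatternAvoids σ p2143) {a b c x y : Fin n} (hba : b < a) (hac : a < c)
    (hab : σ a < σ b) (hbc : σ b < σ c) (hyx : y < x) (hxy : σ x < σ y) (hcx : σ c ≤ σ x)
    {u v : Fin n} (huv : u < v) (hvb : v ≤ b) : σ u < σ v := by
  have hby := lt_of_213_of_inversion h4213 hba hac hab hbc hxy hcx
  have key : ∀ w, w < b → σ w < σ b := by
    intro w hw
    by_contra hwb
    have hbw : σ b < σ w := lt_of_le_of_ne (not_lt.1 hwb) (σ.injective.ne hw.ne')
    have hwc := h4213.lt_of_213 hw hba hac hab hbc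
    exact h2143.not_2143 hw hby hyx hbw (hwc.trans_le hcx) hxy
  rcases hvb.lt_or_eq with hvb | rfl
  · by_contra hlt
    have hvu : σ v < σ u := lt_of_le_of_ne (not_lt.1 hlt) (σ.injective.ne huv.ne')
    have hub := key u (huv.trans hvb)
    exact h2143.not_2143 huv (hvb.trans hby) hyx hvu (by order) hxy
  · exact key u huv

end PatternOccurrences

/-- The first `j` entries of `σ` are increasing, and lie below the last entry of each occurrence
of 213 among the remaining entries. -/
def IsLeftCell {n : ℕ} (σ : Equiv.Perm (Fin n)) (j : ℕ) : Prop :=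
  (∀ u v : Fin n, u < v → (v : ℕ) < j → σ u < σ v) ∧
  ∀ u b a c : Fin n, (u : ℕ) < j → j ≤ (b : ℕ) → b < a → a < c → σ a < σ b → σ b < σ c →
    σ u < σ c

theorem avoidsD_exists_GGridding {n : ℕ} (σ : Equiv.Perm (Fin n))
    (h : PatternAvoids σ p4213 ∧ PatternAvoids σ p2143) :
    ∃ j k, GGridding σ j k := by
  classical
  obtain ⟨h4213, h2143⟩ := h
  have hzero : IsLeftCell σ 0 :=
    ⟨fun _ _ _ hv => absurd hv (Nat.not_lt_zero _),
      fun _ _ _ _ hu => absurd hu (Nat.not_lt_zero _)⟩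
  obtain ⟨j, hjn, ⟨hmono, hbelow⟩, hmax⟩ :
      ∃ j ≤ n, IsLeftCell σ j ∧ ∀ j', j < j' → j' ≤ n → ¬ IsLeftCell σ j' :=
    ⟨Nat.findGreatest (IsLeftCell σ) n, Nat.findGreatest_le n,
      Nat.findGreatest_spec (Nat.zero_le n) hzero,
      fun _ => Nat.findGreatest_is_greatest⟩
  have hno_inversion : ∀ b a c y x : Fin n, j ≤ (b : ℕ) → b < a → a < c → σ a < σ b →
      σ b < σ c → y < x → σ x < σ y → σ c ≤ σ x → False := by
    intro b a c y x hjb hba hac hab hbc hyx hxy hcx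
    have hinc : ∀ u v : Fin n, u < v → v ≤ b → σ u < σ v := fun u v huv hvb =>
      lt_of_le_of_213_of_inversion h4213 h2143 hba hac hab hbc hyx hxy hcx huv hvb
    refine hmax (b + 1) (by omega) (by omega) ⟨fun u v huv hv => hinc u v huv ?_, ?_⟩
    · exact Fin.le_def.2 (by omega)
    · intro u b' a' c' hu hb' hba' hac' hab' hbc'
      have hlt := h4213.lt_of_213 (p := b) (Fin.lt_def.2 (by omega)) hba' hac' hab' hbc'
      rcases (Fin.le_def.2 (by omega) : u ≤ b).lt_or_eq with hub | rfl
      · exact (hinc u b hub le_rfl).trans hlt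
      · exact hlt
  let tops : Finset (Fin n) := Finset.univ.filter fun c => ∃ b a : Fin n,
    j ≤ (b : ℕ) ∧ b < a ∧ a < c ∧ σ a < σ b ∧ σ b < σ c
  have mem_tops : ∀ f : Fin 3 → Fin n, StrictMono f → j ≤ (f 0 : ℕ) →
      (∀ a b : Fin 3, p213 a < p213 b ↔ σ (f a) < σ (f b)) → f 2 ∈ tops := by
    intro f hf hj hp
    exact Finset.mem_filter.2 ⟨Finset.mem_univ _, f 0, f 1, hj, hf (by decide), hf (by decide),
      (hp 1 0).1 (by decide), (hp 0 2).1 (by decide)⟩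
  rcases tops.eq_empty_or_nonempty with hempty | hne
  · refine ⟨j, n, hjn, le_rfl, fun i _ => (σ i).isLt, hmono, ?_, ?_⟩
    · intro i₁ _ _ _ hk
      have := (σ i₁).isLt
      omega
    · rintro ⟨f, hf, hf', hp⟩
      have := mem_tops f hf (hf' 0).1 hp
      simp [hempty] at this
  · obtain ⟨c, hc, hmin⟩ := tops.exists_min_image σ hne
    obtain ⟨b, a, hjb, hba, hac, hab, hbc⟩ := (Finset.mem_filter.1 hc).2
    refine ⟨j, σ c, hjn, (σ c).isLt.le, fun i hi => hbelow i b a c hi hjb hba hac hab hbc,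
      hmono, ?_, ?_⟩
    · intro y x hyx _ _ hx
      by_contra hlt
      exact hno_inversion b a c y x hjb hba hac hab hbc hyx
        (lt_of_le_of_ne (not_lt.1 hlt) (σ.injective.ne hyx.ne')) (Fin.le_def.2 (by omega))
    · rintro ⟨f, hf, hf', hp⟩
      have hle := Fin.le_def.1 (hmin _ (mem_tops f hf (hf' 0).1 hp))
      have := (hf' 2).2
      omega
end

section
/- If a permutation σ of length n admits a G-gridding (a pair (j,k) with 0 ≤ j,k ≤ n such that σ(i) ≤ k for all i ≤ j with σ(1) < ⋯ < σ(j), the entries at positions > j with values > k increasing, and the entries at positions > j with values ≤ k avoiding 213), then σ avoids the pattern 4213. -/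
open Filter Topology PowerSeries

theorem GGriddable_avoids_4213 {n : ℕ} (σ : Equiv.Perm (Fin n))
    (h : ∃ j k, GGridding σ j k) :
    PatternAvoids σ p4213 := by
  obtain ⟨j, k, -, -, hleft, hincr, htop, h213⟩ := h
  rintro ⟨f, hf, hπ⟩
  have lt01 : f 0 < f 1 := hf (by decide)
  have val10 : σ (f 1) < σ (f 0) := (hπ 1 0).1 (by decide)
  have val13 : σ (f 1) < σ (f 3) := (hπ 1 3).1 (by decide)
  have val21 : σ (f 2) < σ (f 1) := (hπ 2 1).1 (by decide)
  have val30 : σ (f 3) < σ (f 0) := (hπ 3 0).1 (by decide)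
  have hj : j ≤ (f 1 : ℕ) := by
    by_contra! hlt
    exact (hincr _ _ lt01 hlt).asymm val10
  have hk : (σ (f 3) : ℕ) + 1 ≤ k := by
    by_contra! hlt
    have hlt' : k < (σ (f 0) : ℕ) + 1 := by omega
    have hj0 : j ≤ (f 0 : ℕ) := by
      by_contra! hpos
      exact (hleft _ hpos).not_gt hlt'
    exact (htop _ _ (hf (by decide)) hj0 hlt' hlt).asymm val30
  refine h213 ⟨f ∘ Fin.succ, hf.comp (Fin.strictMono_succ), fun a => ⟨?_, ?_⟩, fun a b => ?_⟩
  · exact hj.trans (hf.monotone (Fin.succ_le_succ_iff.2 (Fin.zero_le a)))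
  · have hle : σ (f a.succ) ≤ σ (f 3) := by
      fin_cases a
      exacts [val13.le, (val21.trans val13).le, le_rfl]
    exact (Nat.succ_le_succ hle).trans hk
  · refine Iff.trans ?_ (hπ a.succ b.succ)
    revert a b
    decide
end

section
/- Let d(n) denote the number of permutations of length n avoiding the patterns 4213 and 2143, and let D = ∑_{n≥1} d(n)·zⁿ be the associated formal power series over ℚ (with constant term 0). Then D satisfies the algebraic identity (1 − 10z + 24z² − 20z³ + 4z⁴)·D² − 2·(1 − 2z)·(−1 + 5z − 7z² + 2z³)·D + z·(z − 2)·(1 − 2z)² = 0 in ℚ⟦z⟧; equivalently, D(z) = (1 − 2z)·(−1 + 5z − 7z² + 2z³ + (1 − z)·√(1 − 6z + 5z²)) / (1 − 10z + 24z² − 20z³ + 4z⁴). -/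
open Filter Topology PowerSeries

/-- Labels of the generating tree obtained by inserting new maxima into value-complemented
permutations. `r` is the length of the longest decreasing suffix lying below everything before it
(and right of the maximum), `k` is the number of active sites left of the maximum.
* `decr r`: the decreasing permutation of length `r + 1`;
* `lead r`: the maximum comes first, and there is one active site besides the leftmost one and
  those of the suffix;
* `free k r`: the entries right of the maximum are not decreasing, all active sites right of the
  maximum belong to the suffix;
* `tail k r`: the entries right of the maximum are decreasing. -/
inductive NodeLabel : Type
  | decr (r : ℕ)
  | lead (r : ℕ)
  | free (k r : ℕ)
  | tail (k r : ℕ)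

/-- The number of nodes `N` levels below a node with the given label. -/
def labelCount : ℕ → NodeLabel → ℕ
  | 0, _ => 1
  | N + 1, .decr r =>
      labelCount N (.decr (r + 1)) +
        ∑ q ∈ Finset.HasAntidiagonal.antidiagonal r, labelCount N (.tail (1 + 1 + q.1) q.2)
  | N + 1, .lead r =>
      labelCount N (.lead r) + labelCount N (.tail 2 r) +
        ∑ q ∈ Finset.HasAntidiagonal.antidiagonal r, labelCount N (.tail (2 + 1 + q.1) q.2)
  | N + 1, .free k r =>
      ∑ j ∈ Finset.range k, labelCount N (.free (j + 1) r) +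
        ∑ q ∈ Finset.HasAntidiagonal.antidiagonal r, labelCount N (.tail (k + 1 + q.1) q.2)
  | N + 1, .tail k r =>
      labelCount N (.lead r) + ∑ j ∈ Finset.Ico 1 (k - 1), labelCount N (.free (j + 1) r) +
        labelCount N (.tail k r) +
        ∑ q ∈ Finset.HasAntidiagonal.antidiagonal r, labelCount N (.tail (k + 1 + q.1) q.2)

/-- The diagonal series `∑ f m r z ^ (m + r)`. -/
noncomputable def diagSeries (f : ℕ → ℕ → ℕ) : ℚ⟦X⟧ :=
  PowerSeries.mk fun N => ∑ p ∈ Finset.HasAntidiagonal.antidiagonal N, (f p.2 p.1 : ℚ)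

theorem diagSeries_add (f g : ℕ → ℕ → ℕ) :
    diagSeries (fun m r => f m r + g m r) = diagSeries f + diagSeries g := by
  ext N
  simp [diagSeries, Finset.sum_add_distrib]

theorem diagSeries_sum {ι : Type*} (s : Finset ι) (f : ι → ℕ → ℕ → ℕ) :
    diagSeries (fun m r => ∑ j ∈ s, f j m r) = ∑ j ∈ s, diagSeries (f j) := by
  ext N
  simp only [diagSeries, PowerSeries.coeff_mk, map_sum, Nat.cast_sum]
  exact Finset.sum_comm

theorem diagSeries_of_step {f g : ℕ → ℕ → ℕ} (h₀ : ∀ r, f 0 r = 1)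
    (h : ∀ m r, f (m + 1) r = g m r) :
    diagSeries f = PowerSeries.mk 1 + X * diagSeries g := by
  ext N
  cases N with
  | zero => simp [diagSeries, h₀]
  | succ N =>
    simp [diagSeries, PowerSeries.coeff_succ_X_mul, Finset.Nat.sum_antidiagonal_succ', h₀, h]

theorem diagSeries_of_shift {f g h : ℕ → ℕ → ℕ} (h₀ : ∀ m, h m 0 = f m 0)
    (hs : ∀ m r, h m (r + 1) = f m (r + 1) + g m r) :
    diagSeries h = diagSeries f + X * diagSeries g := by
  ext N
  cases N with
  | zero => simp [diagSeries, h₀]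
  | succ N =>
    simp [diagSeries, PowerSeries.coeff_succ_X_mul, Finset.Nat.sum_antidiagonal_succ, h₀, hs,
      Finset.sum_add_distrib, add_assoc]

/-- The nodes obtained by inserting the maximum into the decreasing suffix. -/
def suffixCount (k m r : ℕ) : ℕ :=
  ∑ q ∈ Finset.HasAntidiagonal.antidiagonal r, labelCount m (.tail (k + 1 + q.1) q.2)

theorem diagSeries_suffixCount (k : ℕ) :
    diagSeries (suffixCount k) = diagSeries (fun m r => labelCount m (.tail (k + 1) r)) +
      X * diagSeries (suffixCount (k + 1)) := by
  refine diagSeries_of_shift (by simp [suffixCount]) fun m r => ?_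
  simp only [suffixCount, Finset.Nat.sum_antidiagonal_succ]
  simp only [add_zero, add_right_inj]
  exact Finset.sum_congr rfl fun q _ => by congr 2; ring

theorem diagSeries_lead :
    diagSeries (fun m r => labelCount m (.lead r)) = PowerSeries.mk 1 +
      X * (diagSeries (fun m r => labelCount m (.lead r)) +
        diagSeries (fun m r => labelCount m (.tail 2 r)) + diagSeries (suffixCount 2)) := by
  rw [← diagSeries_add, ← diagSeries_add]
  exact diagSeries_of_step (fun _ => by simp [labelCount])
    fun _ _ => by simp [labelCount, suffixCount]

theorem diagSeries_free (k : ℕ) :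
    diagSeries (fun m r => labelCount m (.free k r)) = PowerSeries.mk 1 +
      X * (∑ j ∈ Finset.range k, diagSeries (fun m r => labelCount m (.free (j + 1) r)) +
        diagSeries (suffixCount k)) := by
  rw [← diagSeries_sum, ← diagSeries_add]
  exact diagSeries_of_step (fun _ => by simp [labelCount])
    fun _ _ => by simp [labelCount, suffixCount]

theorem diagSeries_tail (k : ℕ) :
    diagSeries (fun m r => labelCount m (.tail k r)) = PowerSeries.mk 1 +
      X * (diagSeries (fun m r => labelCount m (.lead r)) +
        ∑ j ∈ Finset.Ico 1 (k - 1), diagSeries (fun m r => labelCount m (.free (j + 1) r)) +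
        diagSeries (fun m r => labelCount m (.tail k r)) + diagSeries (suffixCount k)) := by
  rw [← diagSeries_sum, ← diagSeries_add, ← diagSeries_add, ← diagSeries_add]
  exact diagSeries_of_step (fun _ => by simp [labelCount])
    fun _ _ => by simp [labelCount, suffixCount]

theorem labelCount_decr (N r : ℕ) :
    labelCount (N + 1) (.decr r) =
      1 + ∑ p ∈ Finset.HasAntidiagonal.antidiagonal N, suffixCount 1 p.2 (r + p.1) := by
  induction N generalizing r with
  | zero => simp [labelCount, suffixCount]
  | succ N ih =>
    rw [labelCount, ih, Finset.Nat.sum_antidiagonal_succ]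
    simp only [suffixCount, add_zero]
    rw [add_assoc, add_comm (∑ p ∈ Finset.HasAntidiagonal.antidiagonal N, _)]
    simp only [add_comm, add_left_comm]

theorem eq_zero_of_X_pow_dvd {f : ℚ⟦X⟧} (h : ∀ n : ℕ, X ^ n ∣ f) : f = 0 := by
  ext n
  exact PowerSeries.X_pow_dvd_iff.mp (h (n + 1)) n n.lt_succ_self

/-- A power series solution of a linear recurrence whose leading coefficient is divisible by `X`
satisfies the characteristic quadratic form. -/
theorem characteristic_form_eq_zero {q c : ℚ⟦X⟧} {a : ℕ → ℚ⟦X⟧} (hq : X ∣ q)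
    (h : ∀ k, q * a (k + 2) - c * a (k + 1) + a k = 0) (k : ℕ) :
    q * a (k + 1) ^ 2 - c * a k * a (k + 1) + a k ^ 2 = 0 := by
  refine eq_zero_of_X_pow_dvd fun n => ?_
  induction n generalizing k with
  | zero => simp
  | succ n ih =>
    have key : q * a (k + 1) ^ 2 - c * a k * a (k + 1) + a k ^ 2 =
        q * (q * a (k + 2) ^ 2 - c * a (k + 1) * a (k + 2) + a (k + 1) ^ 2) := by
      linear_combination (a k - q * a (k + 2)) * h k
    rw [key, pow_succ']
    exact mul_dvd_mul hq (ih (k + 1))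

/-- The generating function of the tree rooted at the one-point permutation. -/
theorem labelCount_gf_algebraic {D : ℚ⟦X⟧} (h₀ : coeff 0 D = 0)
    (hD : ∀ n, coeff (n + 1) D = labelCount n (.decr 0)) :
    (1 - 10 * X + 24 * X ^ 2 - 20 * X ^ 3 + 4 * X ^ 4) * D ^ 2
      - 2 * (1 - 2 * X) * (-1 + 5 * X - 7 * X ^ 2 + 2 * X ^ 3) * D
      + X * (X - 2) * (1 - 2 * X) ^ 2 = 0 := by
  set g : ℚ⟦X⟧ := PowerSeries.mk 1 with hg
  have hg1 : g * (1 - X) = 1 := PowerSeries.mk_one_mul_one_sub_eq_one ℚ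
  set a : ℕ → ℚ⟦X⟧ := fun k => diagSeries (fun m r => labelCount m (.free k r)) with ha
  set b : ℕ → ℚ⟦X⟧ := fun k => diagSeries (fun m r => labelCount m (.tail k r)) with hb
  set u : ℕ → ℚ⟦X⟧ := fun k => diagSeries (suffixCount k) with hu
  set x : ℚ⟦X⟧ := diagSeries (fun m r => labelCount m (.lead r)) with hx
  have eD : D = X * g + X ^ 2 * u 1 := by
    ext n
    rcases n with _ | _ | n
    · simp [h₀]
    · simp [hD, hg, pow_two, mul_assoc, labelCount]
    · rw [hD, labelCount_decr]
      simp [hg, pow_two, mul_assoc, hu, diagSeries]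
  have eu : ∀ k, u k = b (k + 1) + X * u (k + 1) := diagSeries_suffixCount
  have ex : x = g + X * (x + b 2 + u 2) := diagSeries_lead
  have ea : ∀ k, a k = g + X * (∑ j ∈ Finset.range k, a (j + 1) + u k) := diagSeries_free
  have eb : ∀ k, b k = g + X * (x + ∑ j ∈ Finset.Ico 1 (k - 1), a (j + 1) + b k + u k) :=
    diagSeries_tail
  have hne : (1 - X : ℚ⟦X⟧) ≠ 0 := right_ne_zero_of_mul_eq_one hg1
  have ea1 : a 1 = g + X * (a 1 + u 1) := by simpa using ea 1
  have hxa : x - a 1 = X * u 2 := by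
    apply mul_left_cancel₀ hne
    linear_combination ex - ea1 - X * eu 1
  have hba : ∀ k, (1 - X) * (b (k + 2) - a (k + 2)) = X ^ 2 * u 2 := fun k => by
    have h1 := eb (k + 2)
    have h2 := ea (k + 2)
    rw [Finset.sum_range_succ, Finset.range_eq_Ico,
      Finset.sum_eq_sum_Ico_succ_bot (Nat.succ_pos k)] at h2
    simp only [show k + 2 - 1 = k + 1 from rfl, zero_add] at h1 h2
    linear_combination h1 - h2 + X * hxa
  have hdiff : ∀ k, (1 - X) * a (k + 1) - a k = X * (u (k + 1) - u k) := fun k => by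
    have h1 := ea (k + 1)
    rw [Finset.sum_range_succ] at h1
    linear_combination h1 - ea k
  have hrec : ∀ k, X * (2 - X) * a (k + 1 + 2) - (1 + X) * a (k + 1 + 1) + a (k + 1) = 0 := by
    intro k
    have h3 : b (k + 3) - a (k + 3) = b (k + 2) - a (k + 2) :=
      mul_left_cancel₀ hne ((hba (k + 1)).trans (hba k).symm)
    linear_combination X * hdiff (k + 2) - hdiff (k + 1) - X * eu (k + 2) + X * eu (k + 1) - X * h3
  have hchar := characteristic_form_eq_zero (a := fun k => a (k + 1)) ⟨2 - X, rfl⟩ hrec 0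
  simp only [zero_add, Nat.reduceAdd] at hchar
  have haD : X * (1 - X) * a 1 = D := by linear_combination X * ea1 - eD
  have hs : 2 * X ^ 2 * (1 - X) ^ 2 * a 2 =
      D * (1 - 2 * X + 2 * X ^ 2) - X * (1 - 2 * X) := by
    linear_combination (-2 * X ^ 2 * (1 - X)) * ((1 - X) * eu 1 + hba 0)
      + (X ^ 2 * (1 - X)) * ((1 - X) * eu 1 + hba 0 + hdiff 1) + X * haD - (1 - 2 * X) * (1 - X) * eD
      - X * (1 - 2 * X) * hg1
  have hV : 2 * X ^ 2 * (1 - X) ^ 2 * a 1 = 2 * X * (1 - X) * D := by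
    linear_combination 2 * X * (1 - X) * haD
  have hquad : X * (2 - X) * (D * (1 - 2 * X + 2 * X ^ 2) - X * (1 - 2 * X)) ^ 2
      - (1 + X) * (2 * X * (1 - X) * D) * (D * (1 - 2 * X + 2 * X ^ 2) - X * (1 - 2 * X))
      + (2 * X * (1 - X) * D) ^ 2 = 0 := by
    rw [← hs, ← hV]
    linear_combination 4 * X ^ 4 * (1 - X) ^ 4 * hchar
  apply mul_left_cancel₀ (pow_ne_zero 2 PowerSeries.X_ne_zero : (X ^ 2 : ℚ⟦X⟧) ≠ 0)
  linear_combination -hquad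

/-- Inserting a new maximum between `u` and `v` creates neither 1342 nor 3412. -/
def ActiveSplit (u v : List ℕ) : Prop :=
  (∀ a ∈ u, v.Pairwise fun c b => ¬(c < b ∧ b < a)) ∧
    ∀ b ∈ v, u.Pairwise fun c a => ¬(c < b ∧ b < a)

/-- A new maximum may be inserted before position `p` of `l`. -/
def ActiveAt (l : List ℕ) (p : ℕ) : Prop :=
  ActiveSplit (l.take p) (l.drop p)

instance (l : List ℕ) : DecidablePred (ActiveAt l) := fun p => by
  unfold ActiveAt ActiveSplit
  infer_instance

/-- Insert the new maximum `l.length` before position `p` of `l`. -/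
def insertMax (l : List ℕ) (p : ℕ) : List ℕ :=
  l.take p ++ l.length :: l.drop p

/-- The number of lists obtained from `l` by `N` insertions of new maxima at active positions. -/
def descCount : ℕ → List ℕ → ℕ
  | 0, _ => 1
  | N + 1, l => ∑ p ∈ Finset.range (l.length + 1) with ActiveAt l p, descCount N (insertMax l p)

/-- All entries of `l` are less than its length. -/
def BoundedByLength (l : List ℕ) : Prop := ∀ x ∈ l, x < l.length

theorem length_insertMax (l : List ℕ) (p : ℕ) : (insertMax l p).length = l.length + 1 := by
  simp only [insertMax, List.length_append, List.length_cons, List.length_take, List.length_drop]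
  omega

theorem mem_insertMax {l : List ℕ} {p x : ℕ} : x ∈ insertMax l p ↔ x = l.length ∨ x ∈ l := by
  have : x ∈ l ↔ x ∈ l.take p ∨ x ∈ l.drop p := by
    rw [← List.mem_append, List.take_append_drop]
  rw [this, insertMax, List.mem_append, List.mem_cons]
  tauto

theorem BoundedByLength.insertMax {l : List ℕ} (hl : BoundedByLength l) (p : ℕ) :
    BoundedByLength (insertMax l p) := by
  intro x hx
  rw [length_insertMax]
  rcases mem_insertMax.1 hx with rfl | hx
  · omega
  · have := hl x hx
    omega

theorem take_insertMax_of_le {l : List ℕ} {p q : ℕ} (hp : p ≤ l.length) (hq : q ≤ p) :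
    (insertMax l p).take q = l.take q := by
  rw [insertMax, List.take_append_of_le_length (by simp; omega), List.take_take, min_eq_left hq]

theorem drop_insertMax_of_le {l : List ℕ} {p q : ℕ} (hp : p ≤ l.length) (hq : q ≤ p) :
    (insertMax l p).drop q = (l.take p).drop q ++ l.length :: l.drop p := by
  rw [insertMax, List.drop_append_of_le_length (by simp; omega)]

theorem drop_insertMax_succ {l : List ℕ} {p q : ℕ} (hp : p ≤ l.length) (hq : p ≤ q) :
    (insertMax l p).drop (q + 1) = l.drop q := by
  rw [insertMax, List.drop_append, List.drop_eq_nil_of_le (by simp; omega), List.length_take,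
    min_eq_left hp, show q + 1 - p = (q - p) + 1 by omega]
  simp [Nat.add_sub_cancel' hq]

theorem take_insertMax_succ {l : List ℕ} {p q : ℕ} (hp : p ≤ l.length) (hq : p ≤ q) :
    (insertMax l p).take (q + 1) = l.take p ++ l.length :: (l.drop p).take (q - p) := by
  rw [insertMax, List.take_append, List.take_of_length_le (by simp; omega), List.length_take,
    min_eq_left hp, show q + 1 - p = (q - p) + 1 by omega]
  simp

theorem take_eq_append {l : List ℕ} {p q : ℕ} (hq : p ≤ q) :
    l.take q = l.take p ++ (l.drop p).take (q - p) := by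
  conv_lhs => rw [← Nat.add_sub_cancel' hq, List.take_add]

theorem drop_eq_append {l : List ℕ} {p q : ℕ} (hq : q ≤ p) :
    l.drop q = (l.take p).drop q ++ l.drop p := by
  rw [List.drop_take, show l.drop p = (l.drop q).drop (p - q) by simp [Nat.add_sub_cancel' hq],
    List.take_append_drop]

theorem activeSplit_max_right {u v w : List ℕ} {M : ℕ} (hu : ∀ x ∈ u, x < M) :
    ActiveSplit u (v ++ M :: w) ↔ ActiveSplit u (v ++ w) := by
  have hM : u.Pairwise fun c a => ¬(c < M ∧ M < a) :=
    List.pairwise_of_forall_mem_list fun _ _ _ ha => by have := hu _ ha; omega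
  have hMr : ∀ a ∈ u, ∀ x, ¬(x < M ∧ M < a) := fun a ha x => by have := hu _ ha; omega
  have hMl : ∀ a ∈ u, ∀ x, ¬(M < x ∧ x < a) := fun a ha x => by have := hu _ ha; omega
  simp only [ActiveSplit, List.pairwise_append, List.pairwise_cons, List.mem_append, List.mem_cons]
  constructor
  · rintro ⟨h₁, h₂⟩
    exact ⟨fun a ha => ⟨(h₁ a ha).1, (h₁ a ha).2.1.2, fun x hx y hy =>
      (h₁ a ha).2.2 x hx y (Or.inr hy)⟩, fun b hb => h₂ b (by tauto)⟩
  · rintro ⟨h₁, h₂⟩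
    refine ⟨fun a ha => ⟨(h₁ a ha).1, ⟨fun y _ => hMl a ha y, (h₁ a ha).2.1⟩, ?_⟩, ?_⟩
    · rintro x hx y (rfl | hy)
      · exact hMr a ha x
      · exact (h₁ a ha).2.2 x hx y hy
    · rintro b (hb | rfl | hb)
      · exact h₂ b (Or.inl hb)
      · exact hM
      · exact h₂ b (Or.inr hb)

theorem activeSplit_max_left {u v w : List ℕ} {M : ℕ} (hv : ∀ x ∈ v, x < M)
    (hw : ∀ x ∈ w, x < M) :
    ActiveSplit (u ++ M :: v) w ↔
      ActiveSplit (u ++ v) w ∧ w.Pairwise (· ≥ ·) ∧ ∀ c ∈ u, ∀ b ∈ w, b ≤ c := by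
  have hdec : (w.Pairwise fun c b => ¬(c < b ∧ b < M)) ↔ w.Pairwise (· ≥ ·) := by
    constructor <;> intro h <;> refine List.Pairwise.imp_of_mem (fun ha hb h => ?_) h
    · have := hw _ hb
      omega
    · omega
  simp only [ActiveSplit, List.pairwise_append, List.pairwise_cons, List.mem_append, List.mem_cons]
  constructor
  · rintro ⟨h₁, h₂⟩
    refine ⟨⟨fun a ha => h₁ a (by tauto), fun b hb => ⟨(h₂ b hb).1, (h₂ b hb).2.1.2,
      fun x hx y hy => (h₂ b hb).2.2 x hx y (Or.inr hy)⟩⟩, hdec.1 (h₁ M (by tauto)), ?_⟩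
    intro c hc b hb
    have := (h₂ b hb).2.2 c hc M (Or.inl rfl)
    have := hw b hb
    omega
  · rintro ⟨⟨h₁, h₂⟩, hd, hlow⟩
    refine ⟨?_, fun b hb => ⟨(h₂ b hb).1, ⟨fun y hy => ?_, (h₂ b hb).2.1⟩, ?_⟩⟩
    · rintro a (ha | rfl | ha)
      · exact h₁ a (Or.inl ha)
      · exact hdec.2 hd
      · exact h₁ a (Or.inr ha)
    · have := hv y hy
      omega
    · rintro x hx y (rfl | hy)
      · have := hlow x hx b hb
        omega
      · exact (h₂ b hb).2.2 x hx y hy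

theorem activeAt_insertMax_of_le {l : List ℕ} (hl : BoundedByLength l) {p q : ℕ}
    (hp : p ≤ l.length) (hq : q ≤ p) : ActiveAt (insertMax l p) q ↔ ActiveAt l q := by
  rw [ActiveAt, take_insertMax_of_le hp hq, drop_insertMax_of_le hp hq,
    activeSplit_max_right fun x hx => hl x (List.mem_of_mem_take hx), ActiveAt,
    ← drop_eq_append hq]

theorem activeAt_insertMax_succ {l : List ℕ} (hl : BoundedByLength l) {p q : ℕ}
    (hp : p ≤ l.length) (hq : p ≤ q) :
    ActiveAt (insertMax l p) (q + 1) ↔ ActiveAt l q ∧ (l.drop q).Pairwise (· ≥ ·) ∧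
      ∀ c ∈ l.take p, ∀ b ∈ l.drop q, b ≤ c := by
  rw [ActiveAt, take_insertMax_succ hp hq, drop_insertMax_succ hp hq,
    activeSplit_max_left (fun x hx => hl x (List.mem_of_mem_drop (List.mem_of_mem_take hx)))
      (fun x hx => hl x (List.mem_of_mem_drop hx)), ActiveAt, take_eq_append hq]

theorem activeAt_zero (l : List ℕ) : ActiveAt l 0 := by
  simp [ActiveAt, ActiveSplit]

theorem count_activeAt_insertMax {l : List ℕ} (hl : BoundedByLength l) {p : ℕ}
    (hp : p ≤ l.length) :
    Nat.count (ActiveAt (insertMax l p)) (p + 1) = Nat.count (ActiveAt l) (p + 1) := by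
  rw [Nat.count_eq_card_filter_range, Nat.count_eq_card_filter_range]
  congr 1
  exact Finset.filter_congr fun q hq =>
    activeAt_insertMax_of_le hl hp (Nat.lt_succ_iff.1 (Finset.mem_range.1 hq))

/-- The last `r` entries of `l` are decreasing and lie below all the others. -/
def IsLowSuffix (l : List ℕ) (r : ℕ) : Prop :=
  (l.drop (l.length - r)).Pairwise (· ≥ ·) ∧
    ∀ c ∈ l.take (l.length - r), ∀ b ∈ l.drop (l.length - r), b ≤ c

theorem pairwise_drop_of_le {l : List ℕ} {p q : ℕ} (h : (l.drop p).Pairwise (· ≥ ·))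
    (hpq : p ≤ q) : (l.drop q).Pairwise (· ≥ ·) :=
  h.sublist (List.drop_sublist_drop_left l hpq)

theorem IsLowSuffix.mono {l : List ℕ} {r s : ℕ} (h : IsLowSuffix l r) (hs : s ≤ r) :
    IsLowSuffix l s := by
  refine ⟨pairwise_drop_of_le h.1 (by omega), fun c hc b hb => ?_⟩
  rw [take_eq_append (show l.length - r ≤ l.length - s by omega), List.mem_append] at hc
  have hd := drop_eq_append (l := l) (show l.length - r ≤ l.length - s by omega)
  rcases hc with hc | hc
  · exact h.2 c hc b (by rw [hd]; exact List.mem_append_right _ hb)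
  · have h1 := h.1
    rw [hd, List.pairwise_append] at h1
    exact h1.2.2 c (by rwa [List.drop_take]) b hb

theorem IsLowSuffix.activeAt {l : List ℕ} {r : ℕ} (h : IsLowSuffix l r) :
    ActiveAt l (l.length - r) := by
  refine ⟨fun a _ => h.1.imp fun h => by omega, fun b hb => ?_⟩
  refine List.pairwise_of_forall_mem_list fun c hc _ _ => ?_
  have := h.2 _ hc b hb
  omega

theorem IsLowSuffix.activeAt_of_ge {l : List ℕ} {r p : ℕ} (h : IsLowSuffix l r)
    (hp : l.length - r ≤ p) (hpl : p ≤ l.length) : ActiveAt l p := by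
  have := (h.mono (show l.length - p ≤ r by omega)).activeAt
  rwa [Nat.sub_sub_self hpl] at this

theorem IsLowSuffix.insertMax {l : List ℕ} (hl : BoundedByLength l) {r p : ℕ}
    (h : IsLowSuffix l r) (hr : r ≤ l.length) (hp : p ≤ l.length - r) :
    IsLowSuffix (insertMax l p) r := by
  rw [IsLowSuffix, length_insertMax, show l.length + 1 - r = l.length - r + 1 by omega,
    drop_insertMax_succ (by omega) hp, take_insertMax_succ (by omega) hp]
  refine ⟨h.1, fun c hc b hb => ?_⟩
  rw [List.mem_append, List.mem_cons] at hc
  have h2 := h.2 c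
  rw [take_eq_append hp, List.mem_append] at h2
  rcases hc with hc | rfl | hc
  · exact h2 (Or.inl hc) b hb
  · exact (hl b (List.mem_of_mem_drop hb)).le
  · exact h2 (Or.inr hc) b hb

/-- The list `l` is a node of the generating tree with the given label. -/
def HasLabel (l : List ℕ) : NodeLabel → Prop
  | .decr r => l.length = r + 1 ∧ l.Pairwise (· ≥ ·)
  | .lead r => ∃ q, 0 < q ∧ q + r < l.length ∧ IsLowSuffix l r ∧ ActiveAt l q ∧
      (∀ p, 0 < p → p < l.length - r → p ≠ q → ¬ActiveAt l p) ∧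
      (l.drop q).Pairwise (· ≥ ·) ∧ ∃ c ∈ l.take q, ∃ b ∈ l.drop q, c < b
  | .free k r => ∃ m, m + r < l.length ∧ IsLowSuffix l r ∧
      Nat.count (ActiveAt l) (m + 1) = k ∧
      (∀ p, m < p → p < l.length - r → ¬ActiveAt l p) ∧ ¬(l.drop (m + 1)).Pairwise (· ≥ ·)
  | .tail k r => ∃ m, m + r < l.length ∧ IsLowSuffix l r ∧
      Nat.count (ActiveAt l) (m + 1) = k ∧
      (∀ p, m < p → p < l.length - r → ¬ActiveAt l p) ∧ (l.drop m).Pairwise (· ≥ ·) ∧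
      0 < m ∧ ActiveAt l m ∧ ∃ M ∈ l.drop m, ∀ c ∈ l.take m, c < M

/-- Inserting the maximum into the low suffix. -/
theorem IsLowSuffix.hasLabel_insertMax {l : List ℕ} (hl : BoundedByLength l) {r p : ℕ}
    (h : IsLowSuffix l r) (hp : l.length - r ≤ p) (hpl : p ≤ l.length) (hp0 : 0 < p) :
    HasLabel (_root_.insertMax l p) (.tail (Nat.count (ActiveAt l) (p + 1)) (l.length - p)) := by
  have h' := h.mono (show l.length - p ≤ r by omega)
  have hd : l.drop (l.length - (l.length - p)) = l.drop p := by rw [Nat.sub_sub_self hpl]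
  refine ⟨p, by rw [length_insertMax]; omega, h'.insertMax hl (by omega) (by omega),
    count_activeAt_insertMax hl hpl, fun q hq hq' => ?_, ?_, hp0, ?_, ?_⟩
  · rw [length_insertMax] at hq'
    omega
  · rw [drop_insertMax_of_le hpl le_rfl]
    simp only [List.drop_take, Nat.sub_self, List.take_zero, List.nil_append,
      List.pairwise_cons]
    exact ⟨fun b hb => (hl b (List.mem_of_mem_drop hb)).le, hd ▸ h'.1⟩
  · exact (activeAt_insertMax_of_le hl hpl le_rfl).2 (h.activeAt_of_ge hp hpl)
  · refine ⟨l.length, by simp [drop_insertMax_of_le hpl le_rfl], fun c hc => ?_⟩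
    rw [take_insertMax_of_le hpl le_rfl] at hc
    exact hl c (List.mem_of_mem_take hc)

theorem hasLabel_free_insertMax {l : List ℕ} (hl : BoundedByLength l) {r m p : ℕ}
    (hm : m + r < l.length) (hlow : IsLowSuffix l r)
    (hin : ∀ q, m < q → q < l.length - r → ¬ActiveAt l q)
    (hnd : ¬(l.drop (m + 1)).Pairwise (· ≥ ·)) (hp : p ≤ m) :
    HasLabel (insertMax l p) (.free (Nat.count (ActiveAt l) (p + 1)) r) := by
  refine ⟨p, by rw [length_insertMax]; omega, hlow.insertMax hl (by omega) (by omega),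
    count_activeAt_insertMax hl (by omega), fun q hq hq' => ?_, ?_⟩
  · obtain ⟨q, rfl⟩ : ∃ s, q = s + 1 := ⟨q - 1, by omega⟩
    rw [length_insertMax] at hq'
    rw [activeAt_insertMax_succ hl (by omega) (by omega)]
    rintro ⟨ha, hd, -⟩
    rcases le_or_gt q m with h | h
    · exact hnd (pairwise_drop_of_le hd (by omega))
    · exact hin q h (by omega) ha
  · rw [drop_insertMax_succ (by omega) le_rfl]
    exact fun hd => hnd (pairwise_drop_of_le hd (by omega))

theorem not_pairwise_drop_of_lt {l : List ℕ} {m q : ℕ} (hq : q < m) (hml : m ≤ l.length)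
    (hM : ∃ M ∈ l.drop m, ∀ c ∈ l.take m, c < M) : ¬(l.drop q).Pairwise (· ≥ ·) := by
  obtain ⟨M, hM, hlt⟩ := hM
  intro hd
  rw [drop_eq_append hq.le, List.pairwise_append] at hd
  have hc : (l.take m)[q]'(by simp; omega) ∈ (l.take m).drop q :=
    List.mem_drop_iff_getElem.2 ⟨0, by simp; omega, by simp⟩
  have h1 := hd.2.2 _ hc M hM
  have h2 := hlt _ (List.mem_of_mem_drop hc)
  omega

theorem not_activeAt_insertMax_of_tail {l : List ℕ} (hl : BoundedByLength l) {r m p q : ℕ}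
    (hm : m + r < l.length) (hin : ∀ q, m < q → q < l.length - r → ¬ActiveAt l q)
    (hM : ∃ M ∈ l.drop m, ∀ c ∈ l.take m, c < M) (hp0 : 0 < p) (hp : p ≤ m) (hq : p < q)
    (hqr : q < (insertMax l p).length - r) : ¬ActiveAt (insertMax l p) q := by
  obtain ⟨q, rfl⟩ : ∃ s, q = s + 1 := ⟨q - 1, by omega⟩
  rw [length_insertMax] at hqr
  rw [activeAt_insertMax_succ hl (by omega) (by omega)]
  rintro ⟨ha, hd, hle⟩
  rcases lt_trichotomy q m with h | rfl | h
  · exact not_pairwise_drop_of_lt h (by omega) hM hd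
  · obtain ⟨M, hM, hlt⟩ := hM
    have hc : l[0]'(by omega) ∈ l.take p := List.mem_take_iff_getElem.2 ⟨0, by simp; omega, by simp⟩
    have hc' : l[0]'(by omega) ∈ l.take q :=
      List.mem_take_iff_getElem.2 ⟨0, by simp; omega, by simp⟩
    have h1 := hle _ hc M hM
    have h2 := hlt _ hc'
    omega
  · exact hin q h (by omega) ha

theorem hasLabel_free_insertMax_of_tail {l : List ℕ} (hl : BoundedByLength l) {r m p : ℕ}
    (hm : m + r < l.length) (hlow : IsLowSuffix l r)
    (hin : ∀ q, m < q → q < l.length - r → ¬ActiveAt l q)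
    (hM : ∃ M ∈ l.drop m, ∀ c ∈ l.take m, c < M) (hp0 : 0 < p) (hp : p < m) :
    HasLabel (insertMax l p) (.free (Nat.count (ActiveAt l) (p + 1)) r) := by
  refine ⟨p, by rw [length_insertMax]; omega, hlow.insertMax hl (by omega) (by omega),
    count_activeAt_insertMax hl (by omega),
    fun q => not_activeAt_insertMax_of_tail hl hm hin hM hp0 hp.le, ?_⟩
  rw [drop_insertMax_succ (by omega) le_rfl]
  exact not_pairwise_drop_of_lt hp (by omega) hM

theorem pairwise_drop_insertMax {l : List ℕ} (hl : BoundedByLength l) {p : ℕ}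
    (hp : p ≤ l.length) (hd : (l.drop p).Pairwise (· ≥ ·)) :
    ((insertMax l p).drop p).Pairwise (· ≥ ·) := by
  rw [drop_insertMax_of_le hp le_rfl]
  simp only [List.drop_take, Nat.sub_self, List.take_zero, List.nil_append, List.pairwise_cons]
  exact ⟨fun b hb => (hl b (List.mem_of_mem_drop hb)).le, hd⟩

theorem exists_max_insertMax {l : List ℕ} (hl : BoundedByLength l) {p : ℕ} (hp : p ≤ l.length) :
    ∃ M ∈ (insertMax l p).drop p, ∀ c ∈ (insertMax l p).take p, c < M := by
  refine ⟨l.length, by simp [drop_insertMax_of_le hp le_rfl], fun c hc => ?_⟩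
  rw [take_insertMax_of_le hp le_rfl] at hc
  exact hl c (List.mem_of_mem_take hc)

theorem hasLabel_tail_insertMax_of_tail {l : List ℕ} (hl : BoundedByLength l) {r m : ℕ}
    (hm : m + r < l.length) (hlow : IsLowSuffix l r)
    (hin : ∀ q, m < q → q < l.length - r → ¬ActiveAt l q) (hd : (l.drop m).Pairwise (· ≥ ·))
    (hact : ActiveAt l m) (hM : ∃ M ∈ l.drop m, ∀ c ∈ l.take m, c < M) (hm0 : 0 < m) :
    HasLabel (insertMax l m) (.tail (Nat.count (ActiveAt l) (m + 1)) r) :=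
  ⟨m, by rw [length_insertMax]; omega, hlow.insertMax hl (by omega) (by omega),
    count_activeAt_insertMax hl (by omega),
    fun _ => not_activeAt_insertMax_of_tail hl hm hin hM hm0 le_rfl,
    pairwise_drop_insertMax hl (by omega) hd, hm0,
    (activeAt_insertMax_of_le hl (by omega) le_rfl).2 hact, exists_max_insertMax hl (by omega)⟩

theorem hasLabel_lead_insertMax_of_tail {l : List ℕ} (hl : BoundedByLength l) {r m : ℕ}
    (hm : m + r < l.length) (hlow : IsLowSuffix l r)
    (hin : ∀ q, m < q → q < l.length - r → ¬ActiveAt l q) (hd : (l.drop m).Pairwise (· ≥ ·))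
    (hact : ActiveAt l m) (hM : ∃ M ∈ l.drop m, ∀ c ∈ l.take m, c < M) (hm0 : 0 < m) :
    HasLabel (insertMax l 0) (.lead r) := by
  refine ⟨m + 1, by omega, by rw [length_insertMax]; omega,
    hlow.insertMax hl (by omega) (by omega), ?_, fun q hq hq' hne => ?_, ?_, ?_⟩
  · rw [activeAt_insertMax_succ hl (by omega) (by omega)]
    exact ⟨hact, hd, by simp⟩
  · obtain ⟨q, rfl⟩ : ∃ s, q = s + 1 := ⟨q - 1, by omega⟩
    rw [length_insertMax] at hq'
    rw [activeAt_insertMax_succ hl (by omega) (by omega)]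
    rintro ⟨ha, hd, -⟩
    rcases lt_or_ge q m with h | h
    · exact not_pairwise_drop_of_lt h (by omega) hM hd
    · exact hin q (by omega) (by omega) ha
  · rwa [drop_insertMax_succ (by omega) (by omega)]
  · obtain ⟨M, hM, hlt⟩ := hM
    have hc : l[0]'(by omega) ∈ l.take m := List.mem_take_iff_getElem.2 ⟨0, by simp; omega, by simp⟩
    rw [drop_insertMax_succ (by omega) (by omega), take_insertMax_succ (by omega) (by omega)]
    exact ⟨_, by simp only [List.take_zero, List.nil_append, List.drop_zero, Nat.sub_zero]
                 exact List.mem_cons_of_mem _ hc, M, hM, hlt _ hc⟩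

theorem hasLabel_lead_insertMax {l : List ℕ} (hl : BoundedByLength l) {r : ℕ}
    (h : HasLabel l (.lead r)) : HasLabel (insertMax l 0) (.lead r) := by
  obtain ⟨q, hq, hqr, hlow, hact, hin, hd, c, hc, b, hb, hcb⟩ := h
  refine ⟨q + 1, by omega, by rw [length_insertMax]; omega,
    hlow.insertMax hl (by omega) (by omega), ?_, fun s hs hs' hne => ?_, ?_, ?_⟩
  · rw [activeAt_insertMax_succ hl (by omega) (by omega)]
    exact ⟨hact, hd, by simp⟩
  · obtain ⟨s, rfl⟩ : ∃ t, s = t + 1 := ⟨s - 1, by omega⟩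
    rw [length_insertMax] at hs'
    rw [activeAt_insertMax_succ hl (by omega) (by omega)]
    rintro ⟨ha, hd', -⟩
    rcases Nat.eq_zero_or_pos s with rfl | h
    · rw [drop_eq_append (Nat.zero_le q), List.pairwise_append] at hd'
      have := hd'.2.2 c (by simpa using hc) b hb
      omega
    · exact hin s h (by omega) (by omega) ha
  · rwa [drop_insertMax_succ (by omega) (by omega)]
  · rw [drop_insertMax_succ (by omega) (by omega), take_insertMax_succ (by omega) (by omega)]
    exact ⟨c, by simp [hc], b, hb, hcb⟩

theorem hasLabel_tail_insertMax_of_lead {l : List ℕ} (hl : BoundedByLength l) {r q : ℕ}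
    (hq : 0 < q) (hqr : q + r < l.length) (hlow : IsLowSuffix l r) (hact : ActiveAt l q)
    (hin : ∀ p, 0 < p → p < l.length - r → p ≠ q → ¬ActiveAt l p)
    (hd : (l.drop q).Pairwise (· ≥ ·)) (hcb : ∃ c ∈ l.take q, ∃ b ∈ l.drop q, c < b) :
    HasLabel (insertMax l q) (.tail (Nat.count (ActiveAt l) (q + 1)) r) := by
  refine ⟨q, by rw [length_insertMax]; omega, hlow.insertMax hl (by omega) (by omega),
    count_activeAt_insertMax hl (by omega), fun s hs hs' => ?_,
    pairwise_drop_insertMax hl (by omega) hd, hq,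
    (activeAt_insertMax_of_le hl (by omega) le_rfl).2 hact, exists_max_insertMax hl (by omega)⟩
  obtain ⟨s, rfl⟩ : ∃ t, s = t + 1 := ⟨s - 1, by omega⟩
  rw [length_insertMax] at hs'
  rw [activeAt_insertMax_succ hl (by omega) (by omega)]
  rintro ⟨ha, -, hle⟩
  rcases eq_or_ne s q with rfl | hne
  · obtain ⟨c, hc, b, hb, hlt⟩ := hcb
    have := hle c hc b hb
    omega
  · exact hin s (by omega) (by omega) hne ha

theorem hasLabel_decr_insertMax {l : List ℕ} (hl : BoundedByLength l) {r : ℕ}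
    (h : HasLabel l (.decr r)) : HasLabel (insertMax l 0) (.decr (r + 1)) := by
  refine ⟨by rw [length_insertMax, h.1], ?_⟩
  simpa using pairwise_drop_insertMax hl (Nat.zero_le _) (by simpa using h.2)

theorem sum_filter_range_count (P : ℕ → Prop) [DecidablePred P] (g : ℕ → ℕ) (n : ℕ) :
    ∑ p ∈ Finset.range n with P p, g (Nat.count P p) = ∑ j ∈ Finset.range (Nat.count P n), g j := by
  induction n with
  | zero => simp
  | succ n ih =>
    rw [Finset.range_add_one, Finset.filter_insert, Nat.count_succ]
    split_ifs with h
    · rw [Finset.sum_insert (by simp), ih, Finset.sum_range_succ, add_comm]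
    · simpa using ih

theorem count_eq_of_forall_not {P : ℕ → Prop} [DecidablePred P] {a b : ℕ} (hab : a ≤ b)
    (h : ∀ p, a ≤ p → p < b → ¬P p) : Nat.count P b = Nat.count P a := by
  obtain ⟨d, rfl⟩ := Nat.exists_eq_add_of_le hab
  have hd : Nat.count (fun k => P (a + k)) d = 0 :=
    Nat.count_iff_forall_not.2 fun m hm => h _ (by omega) (by omega)
  rw [Nat.count_add, hd, add_zero]

theorem filter_range_eq_of_forall_not {P : ℕ → Prop} [DecidablePred P] {a b : ℕ} (hab : a ≤ b)
    (h : ∀ p, a ≤ p → p < b → ¬P p) :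
    (Finset.range b).filter P = (Finset.range a).filter P := by
  ext p
  simp only [Finset.mem_filter, Finset.mem_range]
  exact ⟨fun ⟨h1, h2⟩ => ⟨by by_contra h3; exact h p (by omega) h1 h2, h2⟩,
    fun ⟨h1, h2⟩ => ⟨by omega, h2⟩⟩

/-- Splitting off the insertions into the low suffix. -/
theorem descCount_succ_of_isLowSuffix {N r : ℕ} {l : List ℕ} (hl : BoundedByLength l)
    (ih : ∀ s l, BoundedByLength l → HasLabel l s → descCount N l = labelCount N s)
    (hlow : IsLowSuffix l r) (hr : r < l.length) :
    descCount (N + 1) l =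
      ∑ p ∈ Finset.range (l.length - r) with ActiveAt l p, descCount N (insertMax l p) +
        suffixCount (Nat.count (ActiveAt l) (l.length - r)) N r := by
  have hcount : ∀ i ≤ r + 1, Nat.count (ActiveAt l) (l.length - r + i) =
      Nat.count (ActiveAt l) (l.length - r) + i := fun i hi => by
    have hi : Nat.count (fun k => ActiveAt l (l.length - r + k)) i = i :=
      Nat.count_iff_forall.2 fun j hj => hlow.activeAt_of_ge (by omega) (by omega)
    rw [Nat.count_add, hi]
  rw [descCount, Finset.sum_filter, Finset.sum_filter,
    show l.length + 1 = l.length - r + (r + 1) by omega, Finset.sum_range_add]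
  congr 1
  rw [suffixCount, Finset.Nat.sum_antidiagonal_eq_sum_range_succ_mk]
  refine Finset.sum_congr rfl fun i hi => ?_
  have hi' : i < r + 1 := Finset.mem_range.1 hi
  rw [if_pos (hlow.activeAt_of_ge (by omega) (by omega)),
    ih _ _ (hl.insertMax _) (hlow.hasLabel_insertMax hl (by omega) (by omega) (by omega)),
    add_assoc (l.length - r), hcount (i + 1) (by omega)]
  congr 2 <;> omega

theorem descCount_eq_labelCount (N : ℕ) (s : NodeLabel) (l : List ℕ) (hl : BoundedByLength l)
    (h : HasLabel l s) : descCount N l = labelCount N s := by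
  induction N generalizing s l with
  | zero => simp [descCount, labelCount]
  | succ N ih =>
    cases s with
    | decr r =>
      have hlow : IsLowSuffix l r := by
        have h2 := h.2
        rw [← List.take_append_drop (l.length - r) l, List.pairwise_append] at h2
        exact ⟨h2.2.1, h2.2.2⟩
      have hlen := h.1
      rw [descCount_succ_of_isLowSuffix hl ih hlow (by omega), labelCount,
        show l.length - r = 1 by omega, Nat.count_one, if_pos (activeAt_zero l), Finset.sum_filter,
        Finset.sum_range_one, if_pos (activeAt_zero l),
        ih _ _ (hl.insertMax 0) (hasLabel_decr_insertMax hl h)]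
      rfl
    | lead r =>
      have h0 := hasLabel_lead_insertMax hl h
      obtain ⟨q, hq, hqr, hlow, hact, hin, hd, hcb⟩ := h
      have h1 : ∀ p, 1 ≤ p → p < q → ¬ActiveAt l p := fun p hp hp' =>
        hin p (by omega) (by omega) (by omega)
      have h2 : ∀ p, q + 1 ≤ p → p < l.length - r → ¬ActiveAt l p := fun p hp hp' =>
        hin p (by omega) (by omega) (by omega)
      have hcq : Nat.count (ActiveAt l) (q + 1) = 2 := by
        rw [Nat.count_succ, if_pos hact, count_eq_of_forall_not hq h1, Nat.count_one,
          if_pos (activeAt_zero l)]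
      have hq2 := hasLabel_tail_insertMax_of_lead hl hq hqr hlow hact hin hd hcb
      rw [hcq] at hq2
      rw [descCount_succ_of_isLowSuffix hl ih hlow (by omega), labelCount,
        filter_range_eq_of_forall_not (by omega) h2, count_eq_of_forall_not (by omega) h2, hcq,
        Finset.range_add_one, Finset.filter_insert, if_pos hact, Finset.sum_insert (by simp),
        filter_range_eq_of_forall_not hq h1, Finset.sum_filter, Finset.sum_range_one,
        if_pos (activeAt_zero l), ih _ _ (hl.insertMax _) h0, ih _ _ (hl.insertMax _) hq2,
        add_comm (labelCount N (.tail 2 r))]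
      rfl
    | free k r =>
      obtain ⟨m, hm, hlow, hk, hin, hnd⟩ := h
      rw [descCount_succ_of_isLowSuffix hl ih hlow (by omega), labelCount,
        filter_range_eq_of_forall_not (a := m + 1) (by omega) fun p hp => hin p (by omega),
        count_eq_of_forall_not (a := m + 1) (by omega) fun p hp => hin p (by omega), hk,
        ← hk, ← sum_filter_range_count _ (fun j => labelCount N (.free (j + 1) r))]
      congr 1
      refine Finset.sum_congr rfl fun p hp => ?_
      rw [Finset.mem_filter, Finset.mem_range] at hp
      rw [ih _ _ (hl.insertMax _)
        (hasLabel_free_insertMax hl hm hlow hin hnd (by omega)), Nat.count_succ, if_pos hp.2]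
    | tail k r =>
      obtain ⟨m, hm, hlow, hk, hin, hd, hm0, hact, hM⟩ := h
      have hmono := Nat.count_monotone (ActiveAt l)
      have h0 : Nat.count (ActiveAt l) 1 = 1 := by rw [Nat.count_one, if_pos (activeAt_zero l)]
      have hkm : Nat.count (ActiveAt l) m + 1 = k := by rw [← hk, Nat.count_succ, if_pos hact]
      have hk2 : 1 ≤ k - 1 := by
        have := hmono (show 1 ≤ m by omega)
        omega
      let g : ℕ → ℕ := fun j => if j = 0 then labelCount N (.lead r) else
        if j = k - 1 then labelCount N (.tail k r) else labelCount N (.free (j + 1) r)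
      have hg : ∑ j ∈ Finset.range k, g j = labelCount N (.lead r) +
          ∑ j ∈ Finset.Ico 1 (k - 1), labelCount N (.free (j + 1) r) +
          labelCount N (.tail k r) := by
        rw [show k = (k - 1) + 1 by omega, Finset.sum_range_succ, Finset.range_eq_Ico,
          Finset.sum_eq_sum_Ico_succ_bot (by omega)]
        simp only [Nat.add_sub_cancel, zero_add]
        congr 1
        · congr 1
          refine Finset.sum_congr rfl fun j hj => ?_
          rw [Finset.mem_Ico] at hj
          simp only [g]
          rw [if_neg (by omega), if_neg (by omega)]
        · simp only [g]
          rw [if_neg (by omega), if_pos trivial, Nat.sub_add_cancel (by omega)]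
      rw [descCount_succ_of_isLowSuffix hl ih hlow (by omega), labelCount, ← hg,
        filter_range_eq_of_forall_not (a := m + 1) (by omega) fun p hp => hin p (by omega),
        count_eq_of_forall_not (a := m + 1) (by omega) fun p hp => hin p (by omega), hk]
      congr 1
      rw [← hk, ← sum_filter_range_count]
      refine Finset.sum_congr rfl fun p hp => ?_
      rw [Finset.mem_filter, Finset.mem_range] at hp
      have hps : Nat.count (ActiveAt l) (p + 1) = Nat.count (ActiveAt l) p + 1 := by
        rw [Nat.count_succ, if_pos hp.2]
      simp only [g]
      rcases Nat.eq_zero_or_pos p with rfl | hp0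
      · rw [Nat.count_zero, if_pos rfl]
        exact ih _ _ (hl.insertMax _)
          (hasLabel_lead_insertMax_of_tail hl hm hlow hin hd hact hM hm0)
      · have hp1 := hmono (show 1 ≤ p by omega)
        rw [if_neg (by omega)]
        rcases eq_or_lt_of_le (show p ≤ m by omega) with rfl | hpm
        · rw [if_pos (by omega), ← hk]
          exact ih _ _ (hl.insertMax _)
            (hasLabel_tail_insertMax_of_tail hl hm hlow hin hd hact hM hm0)
        · have hpm' := hmono (show p + 1 ≤ m by omega)
          rw [if_neg (by omega), ← hps]
          exact ih _ _ (hl.insertMax _)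
            (hasLabel_free_insertMax_of_tail hl hm hlow hin hM hp0 hpm)

/-- The list `l` contains neither of the patterns 1342 and 3412. -/
def ListAvoids (l : List ℕ) : Prop :=
  ∀ a b c d, [a, b, c, d].Sublist l → ¬(a < d ∧ d < b ∧ b < c) ∧ ¬(c < d ∧ d < a ∧ a < b)

theorem listAvoids_insert_iff {u v : List ℕ} {M : ℕ} (hu : ∀ x ∈ u, x < M) (hv : ∀ x ∈ v, x < M) :
    ListAvoids (u ++ M :: v) ↔ ListAvoids (u ++ v) ∧ ActiveSplit u v := by
  simp only [ActiveSplit, List.pairwise_iff_forall_sublist]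
  constructor
  · intro h
    refine ⟨fun a b c d hs => h a b c d (hs.trans ((List.sublist_cons_self M v).append_left u)),
      fun a ha c b hs => ?_, fun b hb c a hs => ?_⟩
    · have := (h a M c b ((List.singleton_sublist.2 ha).append (hs.cons_cons M))).2
      have := hu a ha
      omega
    · have := (h c a M b (hs.append ((List.singleton_sublist.2 hb).cons_cons M))).1
      have := hu a (hs.mem (by simp))
      omega
  · rintro ⟨h, h₁, h₂⟩ a b c d hsub
    obtain ⟨s, t', hst, hs, ht'⟩ := List.sublist_append_iff.1 hsub
    rcases List.sublist_cons_iff.1 ht' with ht | ⟨t, rfl, ht⟩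
    · exact h a b c d (hst ▸ hs.append ht)
    · rcases s with - | ⟨x, - | ⟨y, - | ⟨z, - | ⟨w, s⟩⟩⟩⟩
      · simp only [List.nil_append, List.cons.injEq] at hst
        obtain ⟨rfl, rfl⟩ := hst
        have := hv b (ht.mem (by simp))
        have := hv d (ht.mem (by simp))
        omega
      · simp only [List.cons_append, List.nil_append, List.cons.injEq] at hst
        obtain ⟨rfl, rfl, rfl⟩ := hst
        have := h₁ a (hs.mem (by simp)) ht
        have := hv c (ht.mem (by simp))
        omega
      · simp only [List.cons_append, List.nil_append, List.cons.injEq] at hst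
        obtain ⟨rfl, rfl, rfl, rfl⟩ := hst
        have := h₂ d (ht.mem (by simp)) hs
        have := hv d (ht.mem (by simp))
        omega
      · simp only [List.cons_append, List.nil_append, List.cons.injEq] at hst
        obtain ⟨rfl, rfl, rfl, rfl, rfl⟩ := hst
        have := hu a (hs.mem (by simp))
        have := hu b (hs.mem (by simp))
        omega
      · simp at hst

theorem listAvoids_insertMax_iff {l : List ℕ} (hl : BoundedByLength l) (p : ℕ) :
    ListAvoids (insertMax l p) ↔ ListAvoids l ∧ ActiveAt l p := by
  rw [insertMax, listAvoids_insert_iff (fun x hx => hl x (List.mem_of_mem_take hx))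
    fun x hx => hl x (List.mem_of_mem_drop hx), List.take_append_drop, ActiveAt]

open Classical in
/-- The rearrangements of `0, …, n - 1` avoiding 1342 and 3412. -/
noncomputable def avoiders (n : ℕ) : Finset (List ℕ) :=
  {l ∈ (List.range n).permutations.toFinset | ListAvoids l}

theorem mem_avoiders {n : ℕ} {l : List ℕ} :
    l ∈ avoiders n ↔ l.Perm (List.range n) ∧ ListAvoids l := by
  simp [avoiders]

theorem boundedByLength_of_perm_range {n : ℕ} {l : List ℕ} (h : l.Perm (List.range n)) :
    BoundedByLength l := fun x hx => by
  rw [h.length_eq, List.length_range]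
  exact List.mem_range.1 (h.subset hx)

theorem sum_avoiders_descCount (n N : ℕ) :
    ∑ l ∈ avoiders n, descCount (N + 1) l = ∑ l ∈ avoiders (n + 1), descCount N l := by
  simp only [descCount]
  rw [Finset.sum_sigma']
  refine Finset.sum_bij (fun x _ => insertMax x.1 x.2) ?_ ?_ ?_ fun _ _ => rfl
  · rintro ⟨l, p⟩ h
    simp only [Finset.mem_sigma, mem_avoiders, Finset.mem_filter] at h
    obtain ⟨⟨hp, ha⟩, -, hact⟩ := h
    refine mem_avoiders.2 ⟨?_, (listAvoids_insertMax_iff (boundedByLength_of_perm_range hp) p).2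
      ⟨ha, hact⟩⟩
    have hlen : l.length = n := by simpa using hp.length_eq
    rw [insertMax, hlen, List.range_succ]
    refine List.perm_middle.trans ?_
    rw [List.take_append_drop]
    exact (hp.cons n).trans (List.perm_append_singleton n _).symm
  · rintro ⟨l, p⟩ h ⟨l', p'⟩ h' heq
    simp only [Finset.mem_sigma, mem_avoiders, Finset.mem_filter, Finset.mem_range] at h h'
    have hb := boundedByLength_of_perm_range h.1.1
    have hb' := boundedByLength_of_perm_range h'.1.1
    have hlen : l.length = n := by simpa using h.1.1.length_eq
    have hlen' : l'.length = n := by simpa using h'.1.1.length_eq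
    simp only [insertMax, hlen, hlen'] at heq
    have h1 : n ∉ l := fun hm => by have := hb n hm; omega
    have h2 : n ∉ l' := fun hm => by have := hb' n hm; omega
    have ht : l.take p = l'.take p' ∧ l.drop p = l'.drop p' := by
      have := (List.append_cons_inj_of_notMem (fun hm => h1 (List.mem_of_mem_take hm))
        (fun hm => h1 (List.mem_of_mem_drop hm))).1 heq
      tauto
    have hp : p = p' := by
      have := congrArg List.length ht.1
      simp only [List.length_take] at this
      omega
    have hll : l = l' := by
      rw [← List.take_append_drop p l, ← List.take_append_drop p' l', ht.1, ht.2]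
    subst hp hll
    rfl
  · intro l hl
    obtain ⟨hp, ha⟩ := mem_avoiders.1 hl
    have hn : n ∈ l := hp.symm.subset (by simp)
    obtain ⟨u, v, rfl⟩ := List.append_of_mem hn
    have huv : (u ++ v).Perm (List.range n) := by
      rw [List.range_succ] at hp
      exact (List.perm_cons n).1
        ((List.perm_middle.symm.trans hp).trans (List.perm_append_singleton n _))
    have hlen : (u ++ v).length = n := by simpa using huv.length_eq
    have hins : insertMax (u ++ v) u.length = u ++ n :: v := by
      rw [insertMax, hlen, List.take_left, List.drop_left]
    rw [← hins, listAvoids_insertMax_iff (boundedByLength_of_perm_range huv)] at ha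
    refine ⟨⟨u ++ v, u.length⟩, ?_, hins⟩
    simp only [Finset.mem_sigma, mem_avoiders, Finset.mem_filter, Finset.mem_range]
    exact ⟨⟨huv, ha.1⟩, by simp, ha.2⟩

theorem card_avoiders_succ (n : ℕ) : (avoiders (n + 1)).card = labelCount n (.decr 0) := by
  have key : ∀ n N, ∑ l ∈ avoiders n, descCount N l = (avoiders (n + N)).card := by
    intro n N
    induction N generalizing n with
    | zero => simp [descCount]
    | succ N ih => rw [sum_avoiders_descCount, ih, add_right_comm, add_assoc]
  have h1 : avoiders 1 = {[0]} := by
    ext l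
    rw [mem_avoiders, Finset.mem_singleton, List.range_one, List.perm_singleton]
    refine ⟨fun h => h.1, fun h => ⟨h, ?_⟩⟩
    rintro a b c d hs
    have := hs.length_le
    simp [h] at this
  rw [add_comm, ← key 1 n, h1, Finset.sum_singleton]
  exact descCount_eq_labelCount n _ _ (by simp [BoundedByLength]) (by simp [HasLabel])

theorem four_sublist_ofFn_iff {n : ℕ} {g : Fin n → ℕ} {a b c d : ℕ} :
    [a, b, c, d].Sublist (List.ofFn g) ↔
      ∃ f : Fin 4 → Fin n, StrictMono f ∧ ![a, b, c, d] = g ∘ f := by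
  rw [List.sublist_iff_exists_fin_orderEmbedding_get_eq]
  constructor
  · rintro ⟨f, hf⟩
    refine ⟨fun i => Fin.cast List.length_ofFn (f i), fun i j h => f.strictMono h, ?_⟩
    funext i
    have := hf i
    simp only [List.get_ofFn] at this
    rw [Function.comp_apply, ← this]
    fin_cases i <;> rfl
  · rintro ⟨f, hf, h⟩
    refine ⟨OrderEmbedding.ofStrictMono (fun i => Fin.cast List.length_ofFn.symm (f i))
      fun i j h => hf h, fun i => ?_⟩
    have := congrFun h i
    simp only [List.get_ofFn]
    rw [Function.comp_apply] at this
    refine Eq.trans ?_ this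
    fin_cases i <;> rfl

/-- The complement of a permutation, in one-line notation. -/
def complementList {n : ℕ} (σ : Equiv.Perm (Fin n)) : List ℕ :=
  List.ofFn fun i => ((σ i).rev : ℕ)

theorem listAvoids_complementList_iff {n : ℕ} (σ : Equiv.Perm (Fin n)) :
    ListAvoids (complementList σ) ↔ AvoidsD σ := by
  have hv : ∀ i : Fin n, ((σ i).rev : ℕ) + (σ i : ℕ) + 1 = n := fun i => by
    rw [Fin.val_rev]
    omega
  have h4 : PatternContains σ p4213 ↔ ∃ f : Fin 4 → Fin n, StrictMono f ∧
      (σ (f 2) : ℕ) < σ (f 1) ∧ (σ (f 1) : ℕ) < σ (f 3) ∧ (σ (f 3) : ℕ) < σ (f 0) := by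
    refine exists_congr fun f => and_congr_right fun _ => ?_
    simp [Fin.forall_fin_succ, p4213, -Fin.val_fin_lt, Fin.lt_def]
    omega
  have h2 : PatternContains σ p2143 ↔ ∃ f : Fin 4 → Fin n, StrictMono f ∧
      (σ (f 1) : ℕ) < σ (f 0) ∧ (σ (f 0) : ℕ) < σ (f 3) ∧ (σ (f 3) : ℕ) < σ (f 2) := by
    refine exists_congr fun f => and_congr_right fun _ => ?_
    simp [Fin.forall_fin_succ, p2143, -Fin.val_fin_lt, Fin.lt_def]
    omega
  rw [AvoidsD, PatternAvoids, PatternAvoids, h4, h2]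
  simp only [ListAvoids, complementList, four_sublist_ofFn_iff]
  constructor
  · intro h
    have h' : ∀ f : Fin 4 → Fin n, StrictMono f → _ := fun f hf => h _ _ _ _
      ⟨f, hf, (List.ofFn_injective (by simp [List.ofFn_succ]) :
        ![((σ (f 0)).rev : ℕ), ((σ (f 1)).rev : ℕ), ((σ (f 2)).rev : ℕ),
          ((σ (f 3)).rev : ℕ)] = _)⟩
    constructor <;> rintro ⟨f, hf, hlt⟩ <;> have := h' f hf <;> have := hv (f 0) <;>
      have := hv (f 1) <;> have := hv (f 2) <;> have := hv (f 3) <;> omega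
  · rintro ⟨h₁, h₂⟩ a b c d ⟨f, hf, h⟩
    have e0 : a = (σ (f 0)).rev := congrFun h 0
    have e1 : b = (σ (f 1)).rev := congrFun h 1
    have e2 : c = (σ (f 2)).rev := congrFun h 2
    have e3 : d = (σ (f 3)).rev := congrFun h 3
    have := hv (f 0)
    have := hv (f 1)
    have := hv (f 2)
    have := hv (f 3)
    exact ⟨fun h => h₁ ⟨f, hf, by omega⟩, fun h => h₂ ⟨f, hf, by omega⟩⟩

theorem complementList_injective (n : ℕ) :
    Function.Injective (complementList : Equiv.Perm (Fin n) → List ℕ) := fun σ τ h => by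
  have := List.ofFn_injective h
  ext i
  have hi := congrFun this i
  rw [Fin.rev_injective (Fin.val_injective hi)]

theorem exists_complementList_eq_iff {n : ℕ} {l : List ℕ} :
    (∃ σ : Equiv.Perm (Fin n), complementList σ = l) ↔ l.Perm (List.range n) := by
  constructor
  · rintro ⟨σ, rfl⟩
    refine (List.perm_ext_iff_of_nodup (List.nodup_ofFn.2 fun i j h => ?_) List.nodup_range).2
      fun x => ?_
    · exact σ.injective (Fin.rev_injective (Fin.val_injective h))
    · rw [List.mem_ofFn, List.mem_range]
      refine ⟨by rintro ⟨i, rfl⟩; exact Fin.is_lt _, fun hx => ⟨σ.symm (Fin.rev ⟨x, hx⟩), by simp⟩⟩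
  · intro h
    have hlen : l.length = n := by simpa using h.length_eq
    subst hlen
    have hb := boundedByLength_of_perm_range h
    have hinj : Function.Injective fun i : Fin l.length =>
        Fin.rev ⟨l.get i, hb _ (l.get_mem i)⟩ := fun i j hij =>
      List.nodup_iff_injective_get.1 (h.nodup_iff.2 List.nodup_range)
        (congrArg Fin.val (Fin.rev_injective hij))
    refine ⟨Equiv.ofBijective _ (Finite.injective_iff_bijective.1 hinj), ?_⟩
    simp only [complementList, Equiv.ofBijective_apply, Fin.rev_rev]
    exact List.ofFn_get l

theorem dCount_eq_card_avoiders (n : ℕ) : dCount n = (avoiders n).card := by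
  classical
  have h : avoiders n = ({σ | AvoidsD σ} : Finset (Equiv.Perm (Fin n))).image complementList := by
    ext l
    rw [mem_avoiders, ← exists_complementList_eq_iff, Finset.mem_image]
    constructor
    · rintro ⟨⟨σ, rfl⟩, h⟩
      exact ⟨σ, by simpa using (listAvoids_complementList_iff σ).1 h, rfl⟩
    · rintro ⟨σ, h, rfl⟩
      exact ⟨⟨σ, rfl⟩, (listAvoids_complementList_iff σ).2 (by simpa using h)⟩
  rw [h, Finset.card_image_of_injective _ (complementList_injective n), dCount]
  exact Nat.subtype_card _ (by simp)

theorem dCount_gf_algebraic :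
    let z : PowerSeries ℚ := PowerSeries.X
    let D : PowerSeries ℚ := PowerSeries.mk fun n => if n = 0 then 0 else (dCount n : ℚ)
    (1 - 10 * z + 24 * z ^ 2 - 20 * z ^ 3 + 4 * z ^ 4) * D ^ 2
      - 2 * (1 - 2 * z) * (-1 + 5 * z - 7 * z ^ 2 + 2 * z ^ 3) * D
      + z * (z - 2) * (1 - 2 * z) ^ 2 = 0 := by
  intro z D
  exact labelCount_gf_algebraic (by simp [D]) fun n => by
    simp [D, dCount_eq_card_avoiders, card_avoiders_succ]
end
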